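/- arXiv:1712.05212 — 5 statements merged into one kernel-verified Lean document; each statement's English description precedes it below -/
import Mathlib

section
/- There exists a set X ⊆ ω^ω such that X belongs to the tree ideal m₀ but X does not belong to the tree ideal cl₀. -/
open Cardinal Set

/-- A tree on ω: a nonempty set of finite sequences closed under initial segments. -/
def IsTree (T : Set (List ℕ)) : Prop :=
  T.Nonempty ∧ ∀ s ∈ T, ∀ n : ℕ, s.take n ∈ T

/-- The body of a tree: all infinite branches. -/
def treeBody (T : Set (List ℕ)) : Set (ℕ → ℕ) :=
  {x | ∀ n : ℕ, (List.ofFn fun i : Fin n => x i) ∈ T}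

/-- Immediate successors of a node in a tree. -/
def succs (T : Set (List ℕ)) (t : List ℕ) : Set ℕ := {n | t ++ [n] ∈ T}

/-- Sacks (perfect) tree: every node has an extension with at least two immediate successors. -/
def IsSacksTree (T : Set (List ℕ)) : Prop :=
  IsTree T ∧ ∀ s ∈ T, ∃ t ∈ T, s <+: t ∧ (succs T t).Nontrivial

/-- Miller tree: every node has an extension with infinitely many immediate successors. -/
def IsMillerTree (T : Set (List ℕ)) : Prop :=
  IsTree T ∧ ∀ s ∈ T, ∃ t ∈ T, s <+: t ∧ (succs T t).Infinite

/-- Laver tree: has a stem (a node comparable with every node) such that every node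
extending the stem has infinitely many immediate successors. -/
def IsLaverTree (T : Set (List ℕ)) : Prop :=
  IsTree T ∧ ∃ s ∈ T, (∀ t ∈ T, s <+: t ∨ t <+: s) ∧
    ∀ t ∈ T, s <+: t → (succs T t).Infinite

/-- Complete Laver tree: every node has infinitely many immediate successors. -/
def IsCompleteLaverTree (T : Set (List ℕ)) : Prop :=
  IsTree T ∧ ∀ t ∈ T, (succs T t).Infinite

/-- The tree ideal t₀ associated with a family of trees 𝕋. -/
def treeIdeal (𝕋 : Set (Set (List ℕ))) : Set (Set (ℕ → ℕ)) :=
  {A | ∀ P ∈ 𝕋, ∃ Q ∈ 𝕋, Q ⊆ P ∧ treeBody Q ∩ A = ∅}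

/-- t-measurability with respect to a family of trees 𝕋. -/
def TMeasurable (𝕋 : Set (Set (List ℕ))) (A : Set (ℕ → ℕ)) : Prop :=
  ∀ P ∈ 𝕋, ∃ Q ∈ 𝕋, Q ⊆ P ∧ (treeBody Q ⊆ A ∨ treeBody Q ∩ A = ∅)

/-- 𝕋-Bernstein set: meets and omits the body of every tree in 𝕋. -/
def TBernstein (𝕋 : Set (Set (List ℕ))) (B : Set (ℕ → ℕ)) : Prop :=
  ∀ T ∈ 𝕋, (B ∩ treeBody T).Nonempty ∧ (B \ treeBody T).Nonempty

namespace TI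

def px (x : ℕ → ℕ) (n : ℕ) : List ℕ := List.ofFn fun i : Fin n => x i

lemma px_length (x : ℕ → ℕ) (n : ℕ) : (px x n).length = n := by simp [px]

lemma px_succ (x : ℕ → ℕ) (n : ℕ) : px x (n+1) = px x n ++ [x n] := by
  unfold px
  rw [List.ofFn_succ_last]
  rfl

lemma px_mono (x : ℕ → ℕ) {m n : ℕ} (h : m ≤ n) : px x m <+: px x n := by
  induction n, h using Nat.le_induction with
  | base => exact List.prefix_refl _
  | succ n _ ih => rw [px_succ]; exact ih.trans (List.prefix_append _ _)

lemma px_inj {x y : ℕ → ℕ} {n : ℕ} (h : px x n = px y n) : ∀ k < n, x k = y k := by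
  intro k hk
  have := List.ofFn_inj.1 h
  exact congrFun this ⟨k, hk⟩

lemma px_congr {x y : ℕ → ℕ} {n : ℕ} (h : ∀ k < n, x k = y k) : px x n = px y n := by
  unfold px
  congr 1
  funext i
  exact h i i.2

def mu (s : List ℕ) : ℕ := s.sum + s.length

lemma mu_px (x : ℕ → ℕ) (n : ℕ) : n ≤ mu (px x n) := by
  unfold mu; rw [px_length]; omega

lemma mu_mono {s t : List ℕ} (h : s <+: t) : mu s ≤ mu t := by
  obtain ⟨r, rfl⟩ := h
  simp [mu]; omega

lemma mu_snoc (s : List ℕ) (n : ℕ) : n ≤ mu (s ++ [n]) := by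
  simp [mu]; omega

lemma mem_le_sum {s : List ℕ} {n : ℕ} (h : n ∈ s) : n ≤ s.sum := List.le_sum_of_mem h

/-- eventual domination -/
def les (f g : ℕ → ℕ) : Prop := ∃ N, ∀ n ≥ N, f n ≤ g n

lemma exists_chain : ∃ F : Set (ℕ → ℕ), (∀ f ∈ F, Monotone f) ∧
    (∀ f ∈ F, ∀ g ∈ F, les f g ∨ les g f) ∧ ∀ h : ℕ → ℕ, ∃ g ∈ F, ¬ les g h := by
  let r : {f : ℕ → ℕ // Monotone f} → {f : ℕ → ℕ // Monotone f} → Prop :=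
    fun f g => les f.1 g.1
  obtain ⟨hC, hmax⟩ := maxChain_spec (r := r)
  set C := maxChain r
  refine ⟨Subtype.val '' C, ?_, ?_, ?_⟩
  · rintro _ ⟨f, -, rfl⟩; exact f.2
  · rintro _ ⟨f, hf, rfl⟩ _ ⟨g, hg, rfl⟩
    by_cases hfg : f = g
    · subst hfg; exact Or.inl ⟨0, fun _ _ => le_rfl⟩
    · exact hC hf hg hfg
  · intro h
    by_contra hcon
    push Not at hcon
    let k : ℕ → ℕ := fun n => (∑ i ∈ Finset.range (n+1), h i) + 1
    have hk : Monotone k := by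
      intro a b hab
      simp only [k]
      have : ∑ i ∈ Finset.range (a+1), h i ≤ ∑ i ∈ Finset.range (b+1), h i :=
        Finset.sum_le_sum_of_subset (by intro i; simp; omega)
      omega
    have hhk : ∀ n, h n < k n := by
      intro n
      have : h n ≤ ∑ i ∈ Finset.range (n+1), h i :=
        Finset.single_le_sum (f := h) (fun _ _ => Nat.zero_le _) (by simp)
      simp only [k]; omega
    have hch : IsChain r (insert ⟨k, hk⟩ C) := by
      apply hC.insert
      intro f hf _
      right
      obtain ⟨N, hN⟩ := hcon f.1 ⟨f, hf, rfl⟩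
      exact ⟨N, fun n hn => (hN n hn).trans (hhk n).le⟩
    have hmem : (⟨k, hk⟩ : {f : ℕ → ℕ // Monotone f}) ∈ C := by
      have := hmax hch (subset_insert _ _)
      rw [this]; exact mem_insert _ _
    obtain ⟨N, hN⟩ := hcon k ⟨_, hmem, rfl⟩
    exact absurd (hN N le_rfl) (not_le.2 (hhk N))

lemma lemmaU {F : Set (ℕ → ℕ)} (hm : ∀ f ∈ F, Monotone f)
    (hu : ∀ h : ℕ → ℕ, ∃ g ∈ F, ¬ les g h)
    (A : List ℕ → Set ℕ) (hA : ∀ s, (A s).Infinite) (h : List ℕ → ℕ → ℕ) :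
    ∃ g ∈ F, ∀ s, {n | n ∈ A s ∧ h s n < g n}.Infinite := by
  have hnx : ∀ s m, ∃ n ∈ A s, m < n := fun s m => (hA s).exists_gt m
  choose nx hnxA hnxlt using hnx
  obtain ⟨g, hg, hgh⟩ := hu fun m => ∑ i ∈ Finset.range (m+1),
    match (Encodable.decode i : Option (List ℕ)) with
    | some s => h s (nx s m)
    | none => 0
  refine ⟨g, hg, fun s => ?_⟩
  unfold les at hgh
  push Not at hgh
  apply Set.infinite_of_not_bddAbove
  rintro ⟨B, hB⟩
  obtain ⟨m, hm1, hm2⟩ := hgh (max B (Encodable.encode s))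
  have h1 : h s (nx s m) < g m := by
    refine lt_of_le_of_lt ?_ hm2
    have := Finset.single_le_sum (s := Finset.range (m+1)) (f := fun i =>
      match (Encodable.decode i : Option (List ℕ)) with
      | some s => h s (nx s m)
      | none => 0) (fun _ _ => Nat.zero_le _) (a := Encodable.encode s)
      (by simp at hm1 ⊢; omega)
    simpa using this
  have h2 := hm g hg (hnxlt s m).le
  have := hB (a := nx s m) ⟨hnxA s m, by omega⟩
  have := hnxlt s m
  have : B ≤ m := le_trans (le_max_left _ _) hm1
  omega

lemma tree_nil {T : Set (List ℕ)} (h : IsTree T) : [] ∈ T := by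
  obtain ⟨⟨s, hs⟩, h2⟩ := h
  simpa using h2 s hs 0

lemma tree_prefix {T : Set (List ℕ)} (h : IsTree T) {s t : List ℕ} (hst : s <+: t) (ht : t ∈ T) :
    s ∈ T := by
  rw [List.prefix_iff_eq_take.1 hst]; exact h.2 t ht _

/-- branch list builder -/
def L (nxt : ℕ → List ℕ → ℕ) : ℕ → List ℕ
  | 0 => []
  | m+1 => L nxt m ++ [nxt m (L nxt m)]

lemma px_L (nxt : ℕ → List ℕ → ℕ) (m : ℕ) : px (fun m => nxt m (L nxt m)) m = L nxt m := by
  induction m with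
  | zero => simp [px, L]
  | succ m ih => rw [px_succ, ih, L]

lemma lemmaK {F : Set (ℕ → ℕ)} (hm : ∀ f ∈ F, Monotone f)
    (hu : ∀ h : ℕ → ℕ, ∃ g ∈ F, ¬ les g h) {Q : Set (List ℕ)} (hQ : IsCompleteLaverTree Q) :
    ∃ g ∈ F, ∃ X : (ℕ → Bool) → (ℕ → ℕ), Function.Injective X ∧ (∀ z, X z ∈ treeBody Q) ∧
      (∀ z z' n, px (X z) n = px (X z') n → X z n ≠ X z' n → X z n < g (mu (px (X z) n))) ∧
      (∀ z m, g (mu (px (X z) (2*m))) < X z (2*m)) := by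
  classical
  have hb : ∀ t, ∃ b : ℕ × ℕ, b.1 < b.2 ∧ (t ∈ Q → b.1 ∈ succs Q t ∧ b.2 ∈ succs Q t) := by
    intro t
    by_cases ht : t ∈ Q
    · obtain ⟨b0, h0, -⟩ := (hQ.2 t ht).exists_gt 0
      obtain ⟨b1, h1, h01⟩ := (hQ.2 t ht).exists_gt b0
      exact ⟨(b0, b1), h01, fun _ => ⟨h0, h1⟩⟩
    · exact ⟨(0,1), by simp, fun h => absurd h ht⟩
  choose b hblt hbQ using hb
  obtain ⟨g, hg, hinf⟩ := lemmaU hm hu (fun s => if s ∈ Q then succs Q s else univ)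
    (by intro s; by_cases hs : s ∈ Q
        · simp only [hs, if_true]; exact hQ.2 s hs
        · simp only [hs, if_false]; exact infinite_univ)
    (fun s n => (b (s ++ [n])).2)
  have hc : ∀ s, ∃ n, (s ∈ Q → n ∈ succs Q s) ∧ (b (s ++ [n])).2 < g n ∧ g (mu s) < n := by
    intro s
    obtain ⟨n, ⟨h1, h2⟩, h3⟩ := (hinf s).exists_gt (g (mu s))
    refine ⟨n, fun hs => by simpa [hs] using h1, h2, h3⟩
  choose c hcQ hcb hcg using hc
  let nxt : (ℕ → Bool) → ℕ → List ℕ → ℕ := fun z m s =>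
    if m % 2 = 0 then c s else if z (m/2) then (b s).2 else (b s).1
  let X : (ℕ → Bool) → ℕ → ℕ := fun z m => nxt z m (L (nxt z) m)
  have hpx : ∀ z m, px (X z) m = L (nxt z) m := fun z m => px_L (nxt z) m
  have hX : ∀ z m, X z m = nxt z m (px (X z) m) := fun z m => by rw [hpx]
  have hXe : ∀ z m, X z (2*m) = c (px (X z) (2*m)) := fun z m => by rw [hX]; simp [nxt]
  have hXo : ∀ z m, X z (2*m+1) =
      if z m then (b (px (X z) (2*m+1))).2 else (b (px (X z) (2*m+1))).1 := fun z m => by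
    rw [hX]; 
    have h1 : (2*m+1) % 2 = 1 := by omega
    have h2 : (2*m+1) / 2 = m := by omega
    simp [nxt, h1, h2]
  refine ⟨g, hg, X, ?_, ?_, ?_, ?_⟩
  · intro z z' h
    funext m
    have h1 := hXo z m
    have h2 := hXo z' m
    rw [h] at h1
    rw [h1] at h2
    have := hblt (px (X z') (2*m+1))
    cases hz : z m <;> cases hz' : z' m <;> simp [hz, hz'] at h2 ⊢ <;> omega
  · intro z n
    change px (X z) n ∈ Q
    induction n with
    | zero => simpa [px] using tree_nil hQ.1
    | succ n ih =>
      rw [px_succ]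
      change X z n ∈ succs Q (px (X z) n)
      rcases Nat.even_or_odd' n with ⟨k, rfl | rfl⟩
      · rw [hXe]; exact hcQ _ ih
      · rw [hXo]; split_ifs
        · exact (hbQ _ ih).2
        · exact (hbQ _ ih).1
  · intro z z' n hp hne
    rcases Nat.even_or_odd' n with ⟨k, rfl | rfl⟩
    · exact absurd (by rw [hXe, hXe, hp]) hne
    · have h1 : X z (2*k+1) ≤ (b (px (X z) (2*k+1))).2 := by
        rw [hXo]; have := hblt (px (X z) (2*k+1)); split_ifs <;> omega
      have h2 : (b (px (X z) (2*k+1))).2 < g (c (px (X z) (2*k))) := by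
        have := hcb (px (X z) (2*k))
        rwa [← hXe, ← px_succ, hXe] at this
      have h3 : g (c (px (X z) (2*k))) ≤ g (mu (px (X z) (2*k+1))) := by
        apply hm g hg
        rw [px_succ, ← hXe]; exact mu_snoc _ _
      omega
  · intro z m
    rw [hXe]; exact hcg _

lemma inter_countable {F : Set (ℕ → ℕ)}
    (hch : ∀ f ∈ F, ∀ g ∈ F, les f g ∨ les g f)
    {g f : ℕ → ℕ} (hg : g ∈ F) (hf : f ∈ F) (X : (ℕ → Bool) → (ℕ → ℕ))
    (K1 : ∀ z z' n, px (X z) n = px (X z') n → X z n ≠ X z' n → X z n < g (mu (px (X z) n)))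
    (K2 : ∀ z m, g (mu (px (X z) (2*m))) < X z (2*m))
    (M : Set (List ℕ))
    (M1 : ∀ s c c', s ++ [c] ∈ M → s ++ [c'] ∈ M → c ≠ c' → f (mu s) < c)
    (M2 : ∀ x ∈ treeBody M, ∀ N, ∃ n ≥ N, x n < f (mu (px x n)) ∧ x (n+1) < f (mu (px x (n+1)))) :
    (range X ∩ treeBody M).Countable := by
  rcases hch g hg f hf with ⟨N, hN⟩ | ⟨N, hN⟩
  · have : InjOn (fun x => px x N) (range X ∩ treeBody M) := by
      rintro _ ⟨⟨z, rfl⟩, hz⟩ _ ⟨⟨z', rfl⟩, hz'⟩ hp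
      by_contra hne
      have hex : ∃ n, X z n ≠ X z' n := by
        by_contra h; push Not at h; exact hne (funext h)
      classical
      have h1 := Nat.find_spec hex
      have h2 : ∀ k < Nat.find hex, X z k = X z' k := fun k hk => by
        simpa using Nat.find_min hex hk
      set n := Nat.find hex
      have hnN : N ≤ n := by
        by_contra h
        exact h1 (px_inj hp n (by omega))
      have hpn := px_congr h2
      have h3 := K1 z z' n hpn h1
      have h4 := M1 (px (X z) n) (X z n) (X z' n) (by rw [← px_succ]; exact hz _)
        (by rw [hpn, ← px_succ]; exact hz' _) h1
      have := hN (mu (px (X z) n)) (hnN.trans (mu_px _ _))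
      omega
    exact Set.MapsTo.countable_of_injOn (mapsTo_univ _ _) this (Set.to_countable _)
  · convert Set.countable_empty
    rw [Set.eq_empty_iff_forall_notMem]
    rintro _ ⟨⟨z, rfl⟩, hz⟩
    obtain ⟨n, hn, h1, h2⟩ := M2 _ hz N
    rcases Nat.even_or_odd' n with ⟨k, rfl | rfl⟩
    · have := K2 z k
      have := hN _ (hn.trans (mu_px (X z) _))
      omega
    · have := K2 z (k+1)
      have h5 := hN _ ((hn.trans (Nat.le_succ _)).trans (mu_px (X z) _))
      simp only [Nat.succ_eq_add_one] at h5
      rw [show 2*(k+1) = 2*k+1+1 by ring] at this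
      omega

section scheme
variable {Sp : Set (List ℕ)} {step : List ℕ → ℕ → List ℕ} {a : List ℕ → ℕ → ℕ}

lemma pre_uniq {p l : List ℕ} {c d : ℕ} (h1 : p ++ [c] <+: l) (h2 : p ++ [d] <+: l) : c = d := by
  have := List.prefix_of_prefix_length_le h1 h2 (by simp)
  simpa using this

lemma foldSp (hst : ∀ s ∈ Sp, ∀ i, step s i ∈ Sp ∧ s ++ [a s i] <+: step s i)
    {r : List ℕ} (hr : r ∈ Sp) (w : List ℕ) : w.foldl step r ∈ Sp ∧ r <+: w.foldl step r := by
  induction w generalizing r with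
  | nil => exact ⟨hr, List.prefix_refl _⟩
  | cons i w ih =>
    obtain ⟨h1, h2⟩ := ih (hst r hr i).1
    exact ⟨h1, ((List.prefix_append _ _).trans (hst r hr i).2).trans h2⟩

lemma fold_cons (hst : ∀ s ∈ Sp, ∀ i, step s i ∈ Sp ∧ s ++ [a s i] <+: step s i)
    {r : List ℕ} (hr : r ∈ Sp) (i : ℕ) (w : List ℕ) :
    r ++ [a r i] <+: (i :: w).foldl step r :=
  (hst r hr i).2.trans (foldSp hst (hst r hr i).1 w).2

lemma fold_prefix (hst : ∀ s ∈ Sp, ∀ i, step s i ∈ Sp ∧ s ++ [a s i] <+: step s i)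
    {r : List ℕ} (hr : r ∈ Sp) {u w : List ℕ} (h : u <+: w) :
    u.foldl step r <+: w.foldl step r := by
  obtain ⟨v, rfl⟩ := h
  rw [List.foldl_append]
  exact (foldSp hst (foldSp hst hr u).1 v).2

lemma fold_C (hst : ∀ s ∈ Sp, ∀ i, step s i ∈ Sp ∧ s ++ [a s i] <+: step s i)
    (ha : ∀ s ∈ Sp, Function.Injective (a s))
    {r : List ℕ} (hr : r ∈ Sp) {u w : List ℕ} {c : ℕ}
    (h : u.foldl step r ++ [c] <+: w.foldl step r) : ∃ i, u ++ [i] <+: w := by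
  induction u generalizing r w with
  | nil =>
    cases w with
    | nil => have := h.length_le; simp at this
    | cons i w => exact ⟨i, by simp⟩
  | cons i u ih =>
    cases w with
    | nil =>
      have h1 := h.length_le
      have h2 := (foldSp hst hr (i :: u)).2.length_le
      simp at h1 h2; omega
    | cons j w =>
      have h1 := (fold_cons hst hr i u).trans ((List.prefix_append _ _).trans h)
      have h2 := fold_cons hst hr j w
      have := ha r hr (pre_uniq h1 h2)
      subst this
      obtain ⟨k, hk⟩ := ih (hst r hr i).1 h
      exact ⟨k, by simpa using hk⟩

lemma fold_E (hst : ∀ s ∈ Sp, ∀ i, step s i ∈ Sp ∧ s ++ [a s i] <+: step s i)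
    (ha : ∀ s ∈ Sp, Function.Injective (a s))
    {r : List ℕ} (hr : r ∈ Sp) {u w l : List ℕ} (hlen : u.length = w.length)
    (h : u.foldl step r <+: l) (h' : w.foldl step r <+: l) : u = w := by
  induction u generalizing r w with
  | nil => cases w with
    | nil => rfl
    | cons => simp at hlen
  | cons i u ih => cases w with
    | nil => simp at hlen
    | cons j w =>
      have := ha r hr (pre_uniq ((fold_cons hst hr i u).trans h) ((fold_cons hst hr j w).trans h'))
      subst this
      rw [ih (hst r hr i).1 (by simpa using hlen) h h']

lemma fold_M1 (hst : ∀ s ∈ Sp, ∀ i, step s i ∈ Sp ∧ s ++ [a s i] <+: step s i)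
    (ha : ∀ s ∈ Sp, Function.Injective (a s))
    {r : List ℕ} (hr : r ∈ Sp) {w w' s : List ℕ} {c c' : ℕ} (hc : c ≠ c')
    (h : s ++ [c] <+: w.foldl step r) (h' : s ++ [c'] <+: w'.foldl step r) :
    s ∈ Sp ∧ ∃ i, c = a s i := by
  induction w generalizing r w' with
  | nil => exact absurd (pre_uniq (h.trans (foldSp hst hr w').2) h') hc
  | cons i w ih => cases w' with
    | nil => exact absurd (pre_uniq h (h'.trans (foldSp hst hr (i :: w)).2)) hc
    | cons j w' =>
      by_cases hij : i = j
      · subst hij; exact ih (hst r hr i).1 h h'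
      · have h1 := fold_cons hst hr i w
        have h2 := fold_cons hst hr j w'
        rcases lt_trichotomy s.length r.length with hl | hl | hl
        · have e1 := List.prefix_of_prefix_length_le h
            ((List.prefix_append _ _).trans h1) (by simpa using hl)
          have e2 := List.prefix_of_prefix_length_le h'
            ((List.prefix_append _ _).trans h2) (by simpa using hl)
          exact absurd (pre_uniq e1 e2) hc
        · have e1 := List.prefix_of_prefix_length_le ((List.prefix_append _ _).trans h)
            ((List.prefix_append _ _).trans h1) hl.le
          have := e1.eq_of_length hl
          subst this
          exact ⟨hr, i, pre_uniq h h1⟩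
        · have e1 := List.prefix_of_prefix_length_le h1 ((List.prefix_append _ _).trans h)
            (by simp; omega)
          have e2 := List.prefix_of_prefix_length_le h2 ((List.prefix_append _ _).trans h')
            (by simp; omega)
          exact absurd (ha r hr (pre_uniq e1 e2)) hij

lemma fold_len (hst : ∀ s ∈ Sp, ∀ i, step s i ∈ Sp ∧ s ++ [a s i] <+: step s i)
    {r : List ℕ} (hr : r ∈ Sp) (w : List ℕ) : r.length + w.length ≤ (w.foldl step r).length := by
  induction w generalizing r with
  | nil => simp
  | cons i w ih =>
    have h1 := ih (hst r hr i).1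
    have h2 := (hst r hr i).2.length_le
    simp at h1 h2 ⊢; omega

/-- the tree of a scheme, restricted to indices in U -/
def tr (step : List ℕ → ℕ → List ℕ) (r : List ℕ) (U : List ℕ → Prop) : Set (List ℕ) :=
  {p | ∃ w, U w ∧ p <+: w.foldl step r}

lemma fold_L2 (hst : ∀ s ∈ Sp, ∀ i, step s i ∈ Sp ∧ s ++ [a s i] <+: step s i)
    (ha : ∀ s ∈ Sp, Function.Injective (a s))
    {r : List ℕ} (hr : r ∈ Sp) {U : List ℕ → Prop} (hU : ∀ u w, u <+: w → U w → U u)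
    {x : ℕ → ℕ} (hx : x ∈ treeBody (tr step r U)) (n : ℕ) :
    ∃ u, u.length = n ∧ U u ∧ u.foldl step r = px x (u.foldl step r).length := by
  induction n with
  | zero =>
    obtain ⟨w, hw, hp⟩ := hx r.length
    change px x r.length <+: _ at hp
    refine ⟨[], rfl, hU _ _ (List.nil_prefix) hw, ?_⟩
    have := List.prefix_of_prefix_length_le hp (foldSp hst hr w).2 (by rw [px_length])
    exact (this.eq_of_length (by rw [px_length])).symm
  | succ n ih =>
    obtain ⟨u, hn, -, hu⟩ := ih
    have key : ∀ m, (u.foldl step r).length < m → ∃ w i, U w ∧ px x m <+: w.foldl step r ∧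
        u ++ [i] <+: w ∧ x (u.foldl step r).length = a (u.foldl step r) i := by
      intro m hm
      obtain ⟨w, hw, hp⟩ := hx m
      change px x m <+: _ at hp
      have h1 : u.foldl step r ++ [x (u.foldl step r).length] <+: w.foldl step r := by
        refine List.IsPrefix.trans ?_ hp
        conv_lhs => rw [hu]
        rw [px_length, ← px_succ]
        exact px_mono _ hm
      obtain ⟨i, hi⟩ := fold_C hst ha hr h1
      refine ⟨w, i, hw, hp, hi, ?_⟩
      have h2 := fold_prefix hst hr hi
      rw [List.foldl_append] at h2
      exact pre_uniq h1 ((hst _ (foldSp hst hr u).1 i).2.trans h2)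
    obtain ⟨w, i, hw, hp, hi, hxi⟩ := key _ (Nat.lt_succ_self _)
    have hlen : (u.foldl step r).length < ((u ++ [i]).foldl step r).length := by
      have := (hst _ (foldSp hst hr u).1 i).2.length_le
      rw [List.foldl_append]
      simp at this ⊢; omega
    obtain ⟨w2, j, hw2, hp2, hj, hxj⟩ := key _ hlen
    have hij := ha _ (foldSp hst hr u).1 (hxi.symm.trans hxj)
    subst hij
    refine ⟨u ++ [i], by simp [hn], hU _ _ hi hw, ?_⟩
    have := List.prefix_of_prefix_length_le hp2 (fold_prefix hst hr hj) (by rw [px_length])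
    exact (this.eq_of_length (by rw [px_length])).symm

lemma tr_miller (hst : ∀ s ∈ Sp, ∀ i, step s i ∈ Sp ∧ s ++ [a s i] <+: step s i)
    (ha : ∀ s ∈ Sp, Function.Injective (a s))
    {r : List ℕ} (hr : r ∈ Sp) {U : List ℕ → Prop} (h0 : U [])
    (hinf : ∀ u, U u → {i | U (u ++ [i])}.Infinite) : IsMillerTree (tr step r U) := by
  refine ⟨⟨⟨r, [], h0, List.prefix_refl _⟩, ?_⟩, ?_⟩
  · rintro s ⟨w, hw, hs⟩ n
    exact ⟨w, hw, (List.take_prefix _ _).trans hs⟩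
  · rintro s ⟨w, hw, hs⟩
    refine ⟨w.foldl step r, ⟨w, hw, List.prefix_refl _⟩, hs, ?_⟩
    have hsp := (foldSp hst hr w).1
    refine ((hinf w hw).image (f := a (w.foldl step r)) (ha _ hsp).injOn).mono ?_
    rintro _ ⟨i, hi, rfl⟩
    refine ⟨w ++ [i], hi, ?_⟩
    rw [List.foldl_append]
    exact (hst _ hsp i).2

end scheme

lemma miller_ext {P : Set (List ℕ)} (hP : IsMillerTree P) {s : List ℕ} (hs : s ∈ P) (N : ℕ) :
    ∃ t, (t ∈ P ∧ (succs P t).Infinite) ∧ s <+: t ∧ N ≤ t.length := by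
  induction N with
  | zero =>
    obtain ⟨t, h1, h2, h3⟩ := hP.2 s hs
    exact ⟨t, ⟨h1, h3⟩, h2, Nat.zero_le _⟩
  | succ N ih =>
    obtain ⟨t, ⟨h1, h2⟩, h3, h4⟩ := ih
    obtain ⟨n, hn⟩ := h2.nonempty
    obtain ⟨t', h1', h2', h3'⟩ := hP.2 _ hn
    refine ⟨t', ⟨h1', h3'⟩, h3.trans ((List.prefix_append _ _).trans h2'), ?_⟩
    have := h2'.length_le
    simp at this; omega

lemma lemmaM {F : Set (ℕ → ℕ)} (hm : ∀ f ∈ F, Monotone f)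
    (hu : ∀ h : ℕ → ℕ, ∃ g ∈ F, ¬ les g h) {P : Set (List ℕ)} (hP : IsMillerTree P) :
    ∃ f ∈ F, ∃ M : Set (List ℕ), ∃ Mz : (ℕ → Bool) → Set (List ℕ),
      (∀ z, IsMillerTree (Mz z) ∧ Mz z ⊆ P ∧ Mz z ⊆ M) ∧
      (∀ z z' x, x ∈ treeBody (Mz z) → x ∈ treeBody (Mz z') → z = z') ∧
      (∀ s c c', s ++ [c] ∈ M → s ++ [c'] ∈ M → c ≠ c' → f (mu s) < c) ∧
      (∀ x ∈ treeBody M, ∀ N, ∃ n ≥ N, x n < f (mu (px x n)) ∧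
        x (n+1) < f (mu (px x (n+1)))) := by
  classical
  let Sp : Set (List ℕ) := {t | t ∈ P ∧ (succs P t).Infinite}
  have ht : ∀ s n, ∃ t, s ++ [n] ∈ P → t ∈ Sp ∧ s ++ [n] <+: t ∧ s.length + 3 ≤ t.length := by
    intro s n
    by_cases h : s ++ [n] ∈ P
    · obtain ⟨t, h1⟩ := miller_ext hP h (s.length + 3)
      exact ⟨t, fun _ => h1⟩
    · exact ⟨[], fun h' => absurd h' h⟩
  choose t ht using ht
  obtain ⟨g, hg, hinf⟩ := lemmaU hm hu (fun s => if s ∈ Sp then succs P s else univ)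
    (by intro s; by_cases hs : s ∈ Sp
        · simp only [hs, if_true]; exact hs.2
        · simp only [hs, if_false]; exact infinite_univ)
    (fun s n => (t s n).sum)
  have hA : ∀ s, ∃ a : ℕ → ℕ, Function.Injective a ∧ ∀ i, (s ∈ Sp → s ++ [a i] ∈ P) ∧
      (t s (a i)).sum < g (a i) ∧ g (mu s) < a i := by
    intro s
    have h1 : ({n | n ∈ (if s ∈ Sp then succs P s else univ) ∧ (t s n).sum < g n} \
      Set.Iic (g (mu s))).Infinite := (hinf s).sdiff (Set.finite_Iic _)
    refine ⟨fun i => (h1.natEmbedding _ i : ℕ), fun i j h => ?_, fun i => ?_⟩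
    · exact (h1.natEmbedding _).injective (Subtype.ext h)
    · obtain ⟨⟨h2, h3⟩, h4⟩ := (h1.natEmbedding _ i).2
      refine ⟨fun hs => ?_, h3, by simpa using h4⟩
      have h5 : ∀ n, n ∈ (if s ∈ Sp then succs P s else univ) → n ∈ succs P s :=
        fun n hn => by rwa [if_pos hs] at hn
      exact h5 _ h2
  choose a ha hA using hA
  let step : List ℕ → ℕ → List ℕ := fun s i => t s (a s i)
  have hst : ∀ s ∈ Sp, ∀ i, step s i ∈ Sp ∧ s ++ [a s i] <+: step s i := fun s hs i =>
    ⟨(ht s _ ((hA s i).1 hs)).1, (ht s _ ((hA s i).1 hs)).2.1⟩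
  have ha' : ∀ s ∈ Sp, Function.Injective (a s) := fun s _ => ha s
  obtain ⟨r, hr, -⟩ := miller_ext hP (tree_nil hP.1) 0
  change r ∈ Sp at hr
  let U : (ℕ → Bool) → List ℕ → Prop := fun z w =>
    ∀ k v, w[k]? = some v → (v % 2 = 1 ↔ z k = true)
  have hU : ∀ z u w, u <+: w → U z w → U z u := by
    rintro z u w ⟨v, rfl⟩ hw k c hc
    apply hw k c
    have : k < u.length := by
      by_contra h
      rw [List.getElem?_eq_none (by omega)] at hc
      cases hc
    rw [List.getElem?_append_left this]; exact hc
  refine ⟨g, hg, tr step r (fun _ => True), fun z => tr step r (U z), ?_, ?_, ?_, ?_⟩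
  · intro z
    refine ⟨tr_miller hst ha' hr (by intro k v h; simp at h) ?_, ?_, ?_⟩
    · intro u hu
      have hinj : Function.Injective (fun i : ℕ => 2 * i + (if z u.length then 1 else 0)) := by
        intro i j h; simp at h; exact h
      refine (Set.infinite_range_of_injective hinj).mono ?_
      rintro _ ⟨i, rfl⟩ k v hkv
      rcases lt_trichotomy k u.length with h | h | h
      · rw [List.getElem?_append_left h] at hkv
        exact hu k v hkv
      · subst h
        simp at hkv
        subst hkv
        cases z u.length <;> simp
      · rw [List.getElem?_eq_none (by simp; omega)] at hkv
        cases hkv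
    · rintro p ⟨w, -, hp⟩
      exact tree_prefix hP.1 hp (foldSp hst hr w).1.1
    · rintro p ⟨w, -, hp⟩
      exact ⟨w, trivial, hp⟩
  · intro z z' x hx hx'
    funext k
    obtain ⟨u, h1, h2, h3⟩ := fold_L2 hst ha' hr (hU z) hx (k+1)
    obtain ⟨u', h1', h2', h3'⟩ := fold_L2 hst ha' hr (hU z') hx' (k+1)
    have : u = u' := by
      apply fold_E hst ha' hr (h1.trans h1'.symm)
        (l := px x (max (u.foldl step r).length (u'.foldl step r).length))
      · conv_lhs => rw [h3]
        exact px_mono _ (le_max_left _ _)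
      · conv_lhs => rw [h3']
        exact px_mono _ (le_max_right _ _)
    subst this
    have hk : u[k]? = some u[k] := List.getElem?_eq_getElem (by omega)
    have e := (h2 k _ hk).symm.trans (h2' k _ hk)
    exact Bool.eq_iff_iff.2 e
  · rintro s c c' ⟨w, -, h⟩ ⟨w', -, h'⟩ hc
    obtain ⟨hs, i, rfl⟩ := fold_M1 hst ha' hr hc h h'
    exact (hA s i).2.2
  · intro x hx N
    obtain ⟨u, h1, -, h3⟩ := fold_L2 hst ha' hr (fun _ _ _ _ => trivial) hx (N+1)
    have hne : u ≠ [] := by rintro rfl; simp at h1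
    obtain ⟨v, i, rfl⟩ : ∃ v i, u = v ++ [i] := ⟨_, _, (List.dropLast_append_getLast hne).symm⟩
    have hv : v.length = N := by simpa using h1
    rw [List.foldl_append] at h3
    set s := v.foldl step r with hsdef
    have hs : s ∈ Sp := (foldSp hst hr v).1
    have hsl : N ≤ s.length := by
      have := fold_len hst hr v
      rw [← hsdef] at this; omega
    change t s (a s i) = px x (t s (a s i)).length at h3
    obtain ⟨-, hpre, hlen⟩ := ht s _ ((hA s i).1 hs)
    have hmem : ∀ n < (t s (a s i)).length, x n ≤ (t s (a s i)).sum := by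
      intro n hn
      apply mem_le_sum
      rw [h3]
      exact List.mem_ofFn.2 ⟨⟨n, hn⟩, rfl⟩
    have hsum := (hA s i).2.1
    have hpx : a s i ≤ mu (px x (s.length+1)) := by
      refine (mu_snoc s _).trans (mu_mono ?_)
      refine List.prefix_of_prefix_length_le hpre ?_ (by simp [px_length])
      rw [h3]; exact px_mono _ (by omega)
    have hpx2 := hpx.trans (mu_mono (px_mono x (Nat.le_succ (s.length+1))))
    refine ⟨s.length+1, by omega, ?_, ?_⟩
    · exact ((hmem _ (by omega)).trans_lt hsum).trans_le (hm g hg hpx)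
    · exact ((hmem _ (by omega)).trans_lt hsum).trans_le (hm g hg hpx2)

end TI

/-- there is X ⊆ ω^ω with X ∈ m₀ and X ∉ cl₀. -/
theorem stmt1 :
    ∃ X : Set (ℕ → ℕ),
      X ∈ treeIdeal {T | IsMillerTree T} ∧ X ∉ treeIdeal {T | IsCompleteLaverTree T} := by
  classical
  obtain ⟨F, hm, hch, hu⟩ := TI.exists_chain
  have hK := fun (Q : {Q // IsCompleteLaverTree Q}) => TI.lemmaK hm hu Q.2
  choose g hg X hXinj hXQ K1 K2 using hK
  have hM := fun (P : {P // IsMillerTree P}) => TI.lemmaM hm hu P.2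
  choose f hf M Mz hMz hdisj M1 M2 using hM
  obtain ⟨r, hwo, hr⟩ := Cardinal.exists_ord_eq (Set (List ℕ))
  have hcard : #(Set (List ℕ)) = 𝔠 := by simp
  have hseg : ∀ T, #{S | r S T} < 𝔠 := by
    intro T
    rw [← hcard]
    exact Cardinal.card_typein_lt T hr
  have hB : #(ℕ → Bool) = 𝔠 := by simp
  have hpick : ∀ Q : {Q // IsCompleteLaverTree Q}, ∃ x ∈ range (X Q),
      ∀ P : {P // IsMillerTree P}, r P.1 Q.1 → x ∉ treeBody (M P) := by
    intro Q
    by_contra hcon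
    push Not at hcon
    let A : Set (List ℕ) → Set (ℕ → ℕ) := fun S =>
      if h : IsMillerTree S then range (X Q) ∩ treeBody (M ⟨S, h⟩) else ∅
    have hA : ∀ S, #(A S) ≤ ℵ₀ := by
      intro S
      rw [Cardinal.le_aleph0_iff_set_countable]
      simp only [A]
      split_ifs with h
      · exact TI.inter_countable hch (hg Q) (hf ⟨S, h⟩) (X Q) (K1 Q) (K2 Q) _
          (M1 ⟨S, h⟩) (M2 ⟨S, h⟩)
      · exact Set.countable_empty
    have hsub : range (X Q) ⊆ ⋃ S ∈ {S | r S Q.1}, A S := by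
      intro x hx
      obtain ⟨P, h1, h2⟩ := hcon x hx
      simp only [Set.mem_iUnion]
      refine ⟨P.1, h1, ?_⟩
      simp only [A, dif_pos P.2]
      exact ⟨hx, h2⟩
    have h1 : #(range (X Q)) = 𝔠 := by rw [Cardinal.mk_range_eq _ (hXinj Q), hB]
    have h2 := (Cardinal.mk_le_mk_of_subset hsub).trans (Cardinal.mk_biUnion_le A _)
    have h3 : ⨆ x : {S | r S Q.1}, #(A x.1) ≤ ℵ₀ := ciSup_le' fun x => hA _
    have h4 : #{S | r S Q.1} * ⨆ x : {S | r S Q.1}, #(A x.1) < 𝔠 :=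
      Cardinal.mul_lt_of_lt Cardinal.aleph0_le_continuum (hseg _)
        (h3.trans_lt Cardinal.aleph0_lt_continuum)
    rw [h1] at h2
    exact absurd h4 (not_lt.2 h2)
  choose x hx hxM using hpick
  refine ⟨range x, ?_, ?_⟩
  · intro P hP
    by_contra hcon
    push Not at hcon
    have hz : ∀ z, ∃ Q, x Q ∈ treeBody (Mz ⟨P, hP⟩ z) := by
      intro z
      obtain ⟨y, hy, Q, rfl⟩ := 
        hcon (Mz ⟨P, hP⟩ z) (hMz ⟨P, hP⟩ z).1 (hMz ⟨P, hP⟩ z).2.1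
      exact ⟨Q, hy⟩
    choose q hq using hz
    have hqr : ∀ z, (q z).1 ∈ insert P {S | r S P} := by
      intro z
      rcases trichotomous_of r (q z).1 P with h | h | h
      · exact Or.inr h
      · exact Or.inl h
      · exact absurd (fun n => (hMz ⟨P, hP⟩ z).2.2 (hq z n)) (hxM (q z) ⟨P, hP⟩ h)
    have hinj : Function.Injective (fun z => (⟨(q z).1, hqr z⟩ : ↥(insert P {S | r S P}))) := by
      intro z z' h
      have h1 : q z = q z' := Subtype.ext (Subtype.mk.inj h)
      exact hdisj ⟨P, hP⟩ z z' (x (q z)) (hq z) (by rw [h1]; exact hq z')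
    have h1 := Cardinal.mk_le_of_injective hinj
    rw [hB] at h1
    have h2 : #(insert P {S | r S P} : Set _) < 𝔠 :=
      (Cardinal.mk_insert_le).trans_lt (Cardinal.add_lt_of_lt Cardinal.aleph0_le_continuum
        (hseg P) (Cardinal.one_lt_aleph0.trans Cardinal.aleph0_lt_continuum))
    exact absurd h2 (not_lt.2 h1)
  · intro h
    have huniv : IsCompleteLaverTree (Set.univ : Set (List ℕ)) := by
      refine ⟨⟨⟨[], trivial⟩, fun _ _ _ => trivial⟩, fun t _ => ?_⟩
      have : succs Set.univ t = Set.univ := by ext; simp [succs]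
      rw [this]; exact infinite_univ
    obtain ⟨Q, hQ, -, hdis⟩ := h Set.univ huniv
    have : x ⟨Q, hQ⟩ ∈ treeBody Q ∩ range x := by
      refine ⟨?_, mem_range_self _⟩
      obtain ⟨z, hz⟩ := hx ⟨Q, hQ⟩
      rw [← hz]; exact hXQ ⟨Q, hQ⟩ z
    rw [hdis] at this
    exact this
end

section
/- There exists a set X ⊆ ω^ω such that X belongs to the tree ideal s₀ but X does not belong to the tree ideal cl₀. -/
open Cardinal Set

theorem ini_succ (x : ℕ → ℕ) (n : ℕ) :
    (List.ofFn fun i : Fin (n+1) => x i) = (List.ofFn fun i : Fin n => x i) ++ [x n] := by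
  rw [List.ofFn_succ_last]; simp

theorem ini_take (x : ℕ → ℕ) (k : ℕ) : ∀ n : ℕ, 
    (List.ofFn fun i : Fin n => x i).take k = List.ofFn fun i : Fin (min k n) => x i := by
  intro n
  apply List.ext_getElem
  · simp
  · intro i h1 h2
    simp

theorem ini_eq_iff (x y : ℕ → ℕ) (n : ℕ) :
    (List.ofFn fun i : Fin n => x i) = (List.ofFn fun i : Fin n => y i) ↔ ∀ i < n, x i = y i := by
  rw [List.ofFn_inj, funext_iff]
  exact ⟨fun h i hi => h ⟨i, hi⟩, fun h i => h i i.2⟩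

theorem ini_prefix (x : ℕ → ℕ) {n m : ℕ} (h : n ≤ m) :
    (List.ofFn fun i : Fin n => x i) <+: (List.ofFn fun i : Fin m => x i) := by
  have := ini_take x n m
  rw [min_eq_left h] at this
  rw [← this]
  exact List.take_prefix _ _

theorem ini_of_rec (x : ℕ → ℕ) (s : ℕ → List ℕ) (h0 : s 0 = []) (h : ∀ n, s (n+1) = s n ++ [x n])
    (n : ℕ) : (List.ofFn fun i : Fin n => x i) = s n := by
  induction n with
  | zero => simp [h0]
  | succ n ih => rw [ini_succ, ih, h]

theorem mem_of_approx {D : Set (ℕ → ℕ)} (hD : IsClosed D) (x : ℕ → ℕ)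
    (h : ∀ n, ∃ y ∈ D, ∀ i < n, y i = x i) : x ∈ D := by
  choose y hy hyx using h
  refine hD.mem_of_tendsto (b := Filter.atTop) (f := y) ?_ (Filter.Eventually.of_forall hy)
  rw [tendsto_pi_nhds]
  intro i
  apply tendsto_const_nhds.congr'
  filter_upwards [Filter.eventually_gt_atTop i] with n hn
  exact (hyx n i hn).symm

theorem perfect_tree {D : Set (ℕ → ℕ)} (hD : Perfect D) (hne : D.Nonempty) {P : Set (List ℕ)}
    (hP : D ⊆ treeBody P) : ∃ Q, IsSacksTree Q ∧ Q ⊆ P ∧ treeBody Q ⊆ D := by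
  refine ⟨{s | ∃ x ∈ D, ∃ n : ℕ, s = List.ofFn fun i : Fin n => x i}, ⟨⟨?_, ?_⟩, ?_⟩, ?_, ?_⟩
  · obtain ⟨x, hx⟩ := hne
    exact ⟨_, x, hx, 0, rfl⟩
  · rintro s ⟨x, hx, n, rfl⟩ k
    exact ⟨x, hx, _, ini_take x k n⟩
  · rintro s ⟨x, hx, n, rfl⟩
    have hacc := preperfect_iff_nhds.1 hD.acc x hx (PiNat.cylinder x n)
      ((PiNat.isOpen_cylinder _ x n).mem_nhds (PiNat.self_mem_cylinder x n))
    obtain ⟨y, ⟨hyU, hyD⟩, hyx⟩ := hacc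
    have hex : ∃ m, y m ≠ x m := by
      by_contra hcon
      push Not at hcon
      exact hyx (funext hcon)
    classical
    let m := Nat.find hex
    have hm : y m ≠ x m := Nat.find_spec hex
    have hlt : ∀ i < m, y i = x i := fun i hi => by
      have := Nat.find_min hex hi
      simpa using this
    have hnm : n ≤ m := by
      by_contra hcon
      exact hm (hyU m (by omega))
    refine ⟨_, ⟨x, hx, m, rfl⟩, ini_prefix x hnm, x m, ⟨x, hx, m+1, (ini_succ x m).symm⟩,
      y m, ⟨y, hyD, m+1, ?_⟩, hm.symm⟩
    rw [ini_succ y m, (ini_eq_iff y x m).2 hlt]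
  · rintro s ⟨x, hx, n, rfl⟩
    exact hP hx n
  · intro x hx
    apply mem_of_approx hD.closed
    intro n
    obtain ⟨y, hy, k, hk⟩ := hx n
    have hl := congrArg List.length hk
    simp only [List.length_ofFn] at hl
    subst hl
    exact ⟨y, hy, (ini_eq_iff y x n).1 hk.symm⟩

theorem uncountable_tree {C : Set (ℕ → ℕ)} (hC : IsClosed C) (hunc : ¬ C.Countable)
    {P : Set (List ℕ)} (hP : C ⊆ treeBody P) :
    ∃ Q, IsSacksTree Q ∧ Q ⊆ P ∧ treeBody Q ⊆ C := by
  obtain ⟨D, hD, hne, hDC⟩ := exists_perfect_nonempty_of_isClosed_of_not_countable hC hunc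
  obtain ⟨Q, h1, h2, h3⟩ := perfect_tree hD hne (hDC.trans hP)
  exact ⟨Q, h1, h2, h3.trans hDC⟩

theorem isClosed_treeBody (P : Set (List ℕ)) : IsClosed (treeBody P) := by
  rw [← closure_subset_iff_isClosed]
  intro x hx n
  rw [mem_closure_iff] at hx
  obtain ⟨y, hy, hyP⟩ := hx _ (PiNat.isOpen_cylinder _ x n) (PiNat.self_mem_cylinder x n)
  rw [← (ini_eq_iff y x n).2 hy]
  exact hyP n

theorem sacks_succ {P : Set (List ℕ)} (hP : IsSacksTree P) (s : List ℕ) (hs : s ∈ P) :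
    ∃ n, s ++ [n] ∈ P := by
  obtain ⟨t, ht, ⟨r, rfl⟩, a, ha, -⟩ := hP.2 s hs
  have h := hP.1.2 _ ha (s.length + 1)
  cases r with
  | nil => exact ⟨a, by simpa [succs] using ha⟩
  | cons c r => exact ⟨c, by simpa [List.take_append, List.take_of_length_le (Nat.le_succ s.length)] using h⟩

theorem sacks_branch {P : Set (List ℕ)} (hP : IsSacksTree P) (t : List ℕ) (ht : t ∈ P) :
    ∃ x ∈ treeBody P, (List.ofFn fun i : Fin t.length => x i) = t := by
  have hsucc : ∀ s, ∃ n, s ∈ P → s ++ [n] ∈ P := by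
    intro s
    by_cases hs : s ∈ P
    · obtain ⟨n, hn⟩ := sacks_succ hP s hs
      exact ⟨n, fun _ => hn⟩
    · exact ⟨0, fun h => absurd h hs⟩
  choose p hp using hsucc
  let v : ℕ → List ℕ → ℕ := fun n l => if h : n < t.length then t[n] else p l
  let s : ℕ → List ℕ := fun n => Nat.rec [] (fun n l => l ++ [v n l]) n
  have hs : ∀ n, s (n+1) = s n ++ [v n (s n)] := fun n => rfl
  have hini := ini_of_rec (fun n => v n (s n)) s rfl hs
  have htake : ∀ n ≤ t.length, s n = t.take n := by
    intro n
    induction n with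
    | zero => intro _; simp [s]
    | succ n ih =>
      intro hn
      rw [hs, ih (by omega)]
      simp only [v]
      rw [dif_pos (by omega), List.take_append_getElem]
  have hmem : ∀ n, s n ∈ P := by
    intro n
    induction n with
    | zero => rw [htake 0 (by omega)]; exact hP.1.2 t ht 0
    | succ n ih =>
      by_cases hn : n < t.length
      · rw [htake (n+1) hn]; exact hP.1.2 t ht _
      · rw [hs]
        simp only [v]
        rw [dif_neg hn]
        exact hp _ ih
  refine ⟨fun n => v n (s n), fun n => ?_, ?_⟩
  · rw [hini]; exact hmem n
  · rw [hini, htake _ le_rfl, List.take_length]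

theorem perfect_treeBody {P : Set (List ℕ)} (hP : IsSacksTree P) : Perfect (treeBody P) := by
  refine ⟨isClosed_treeBody P, preperfect_iff_nhds.2 ?_⟩
  intro x hx U hU
  obtain ⟨V, ⟨y, n, rfl⟩, hxV, hVU⟩ := (PiNat.isTopologicalBasis_cylinders _).mem_nhds_iff.1 hU
  rw [← PiNat.mem_cylinder_iff_eq.1 hxV] at hVU
  obtain ⟨t, ht, hpre, a, ha, b, hb, hab⟩ := hP.2 _ (hx n)
  have key : ∀ c, t ++ [c] ∈ P → ∃ z ∈ U ∩ treeBody P, z t.length = c := by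
    intro c hc
    obtain ⟨z, hz, hzt⟩ := sacks_branch hP _ hc
    rw [List.length_append, List.length_singleton, ini_succ] at hzt
    obtain ⟨h1, h2⟩ := List.append_inj' hzt rfl
    refine ⟨z, ⟨hVU ?_, hz⟩, by simpa using h2⟩
    have hn : n ≤ t.length := by simpa using hpre.length_le
    have : (List.ofFn fun i : Fin n => z i) <+: t := by
      conv_rhs => rw [← h1]
      exact ini_prefix z hn
    have h3 := List.prefix_of_prefix_length_le this hpre (by simp)
    exact (ini_eq_iff z x n).1 (h3.eq_of_length (by simp))
  obtain ⟨z, hz, hza⟩ := key a ha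
  obtain ⟨w, hw, hwb⟩ := key b hb
  by_cases hzx : z = x
  · refine ⟨w, hw, fun hwx => hab ?_⟩
    rw [← hza, ← hwb, hzx, hwx]
  · exact ⟨z, hz, hzx⟩

def mixb (ξ η : ℕ → Bool) : ℕ → Bool := fun n => if n % 2 = 0 then ξ (n/2) else η (n/2)

theorem mixb_even (ξ η : ℕ → Bool) (n : ℕ) : mixb ξ η (2*n) = ξ n := by simp [mixb]

theorem mixb_odd (ξ η : ℕ → Bool) (n : ℕ) : mixb ξ η (2*n+1) = η n := by
  have h1 : (2*n+1) % 2 = 1 := by omega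
  have h2 : (2*n+1)/2 = n := by omega
  simp [mixb, h1, h2]

theorem mixb_inj (ξ : ℕ → Bool) : Function.Injective (mixb ξ) := by
  intro η η' h
  funext n
  rw [← mixb_odd ξ η n, h, mixb_odd]

theorem mk_cantor : #(ℕ → Bool) = 𝔠 := by simp

theorem exists_avoid {E : Set (ℕ → Bool)} (hE : #E < 𝔠) : ∃ ξ, ξ ∉ E := by
  by_contra h
  push Not at h
  rw [eq_univ_of_forall h, mk_univ, mk_cantor] at hE
  exact lt_irrefl _ hE

theorem not_countable_of_inj {C : Set (ℕ → ℕ)} (e : (ℕ → Bool) → ℕ → ℕ)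
    (he : Function.Injective e) (h : ∀ η, e η ∈ C) : ¬ C.Countable := by
  intro hc
  have h1 : #(range e) ≤ ℵ₀ := (hc.mono (range_subset_iff.2 h)).le_aleph0
  rw [mk_range_eq e he, mk_cantor] at h1
  exact absurd h1 (not_le.2 aleph0_lt_continuum)

theorem avoid_small {P : Set (List ℕ)} (hP : IsSacksTree P) {Y : Set (ℕ → ℕ)} (hY : #Y < 𝔠) :
    ∃ Q, IsSacksTree Q ∧ Q ⊆ P ∧ treeBody Q ∩ Y = ∅ := by
  have hne : (treeBody P).Nonempty := by
    obtain ⟨t, ht⟩ := hP.1.1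
    obtain ⟨x, hx, -⟩ := sacks_branch hP t ht
    exact ⟨x, hx⟩
  obtain ⟨f, hfP, hfc, hfi⟩ : ∃ f : (ℕ → Bool) → (ℕ → ℕ), range f ⊆ treeBody P ∧ Continuous f ∧
      Function.Injective f := by
    let := TopologicalSpace.upgradeIsCompletelyMetrizable (ℕ → ℕ)
    exact (perfect_treeBody hP).exists_nat_bool_injection hne
  let E : Set (ℕ → Bool) := (fun y => fun n => Function.invFun f y (2*n)) '' Y
  obtain ⟨ξ, hξ⟩ := exists_avoid (E := E) (mk_image_le.trans_lt hY)
  let Z : Set (ℕ → Bool) := {z | ∀ n, z (2*n) = ξ n}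
  have hZ : IsClosed Z := by
    have : Z = ⋂ n, {z | z (2*n) = ξ n} := by ext; simp [Z]
    rw [this]
    exact isClosed_iInter fun n => isClosed_eq (continuous_apply _) continuous_const
  have hC : IsClosed (f '' Z) := (hZ.isCompact.image hfc).isClosed
  obtain ⟨Q, h1, h2, h3⟩ := uncountable_tree hC
    (not_countable_of_inj (fun η => f (mixb ξ η)) (hfi.comp (mixb_inj ξ))
      fun η => ⟨_, fun n => mixb_even ξ η n, rfl⟩)
    ((image_subset_range f Z).trans hfP)
  refine ⟨Q, h1, h2, ?_⟩
  rw [eq_empty_iff_forall_notMem]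
  rintro y ⟨hyQ, hyY⟩
  obtain ⟨z, hz, rfl⟩ := h3 hyQ
  refine hξ ⟨f z, hyY, ?_⟩
  funext n
  simp only [Function.leftInverse_invFun hfi z]
  exact hz n

theorem tf_choose {J A : Type} [LinearOrder J] [WellFoundedLT J]
    (R : (j : J) → (Iio j → A) → A → Prop) (h : ∀ j u, ∃ a, R j u a) :
    ∃ G : J → A, ∀ j, R j (fun i => G i) (G j) := by
  choose g hg using h
  let G : J → A := (wellFounded_lt (α := J)).fix (fun j ih => g j (fun i => ih i.1 i.2))
  have hG : ∀ j, G j = g j (fun i => G i) := fun j => WellFounded.fix_eq _ _ _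
  refine ⟨G, fun j => ?_⟩
  conv => arg 3; rw [hG j]
  exact hg _ _

def vseq (F g : ℕ → ℕ) : ℕ → ℕ
  | 0 => g 0
  | m+1 => max (g (m+1)) (F (F (vseq F g m)) + vseq F g m + 1)

theorem le_vseq (F g : ℕ → ℕ) : g ≤ vseq F g := by
  intro m
  cases m with
  | zero => exact le_rfl
  | succ m => exact le_max_left _ _

theorem vseq_succ (F g : ℕ → ℕ) (m : ℕ) : F (F (vseq F g m)) + vseq F g m + 1 ≤ vseq F g (m+1) :=
  le_max_right _ _

theorem id_le_vseq (F g : ℕ → ℕ) (m : ℕ) : m ≤ vseq F g m := by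
  induction m with
  | zero => exact Nat.zero_le _
  | succ m ih => have := vseq_succ F g m; omega

def boxC (F g : ℕ → ℕ) (ξ : ℕ → Bool) : Set (ℕ → ℕ) :=
  {x | (∀ m, vseq F g m ≤ x m ∧ x m < F (F (vseq F g m))) ∧
    ∀ n, decide (F (vseq F g (2*n)) ≤ x (2*n)) = ξ n}

theorem boxC_closed (F g : ℕ → ℕ) (ξ : ℕ → Bool) : IsClosed (boxC F g ξ) := by
  have : boxC F g ξ = (⋂ m, (fun x : ℕ → ℕ => x m) ⁻¹' 
      {k | vseq F g m ≤ k ∧ k < F (F (vseq F g m))}) ∩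
      ⋂ n, (fun x : ℕ → ℕ => x (2*n)) ⁻¹' {k | decide (F (vseq F g (2*n)) ≤ k) = ξ n} := by
    ext; simp [boxC]
  rw [this]
  exact (isClosed_iInter fun n => (isClosed_discrete _).preimage (continuous_apply _)).inter
    (isClosed_iInter fun n => (isClosed_discrete _).preimage (continuous_apply _))

theorem laver_bound {L : Set (List ℕ)} (hL : IsCompleteLaverTree L) :
    ∃ N : ℕ → ℕ, ∀ b, ∀ t ∈ L, t.length ≤ b → (∀ a ∈ t, a ≤ b) →
      ∃ n, t ++ [n] ∈ L ∧ b ≤ n ∧ n < N b := by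
  have : ∀ b, ∃ N, ∀ t ∈ L, t.length ≤ b → (∀ a ∈ t, a ≤ b) →
      ∃ n, t ++ [n] ∈ L ∧ b ≤ n ∧ n < N := by
    intro b
    have hfin : {t : List ℕ | t.length ≤ b ∧ ∀ a ∈ t, a ≤ b}.Finite := by
      have : Finite {a : ℕ // a ≤ b} := (Set.finite_Iic b).to_subtype
      refine ((List.finite_length_le {a : ℕ // a ≤ b} b).image (List.map Subtype.val)).subset ?_
      rintro t ⟨h1, h2⟩
      lift t to List {a : ℕ // a ≤ b} using h2
      exact ⟨t, by simpa using h1, rfl⟩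
    have hn : ∀ t, ∃ n, t ∈ L → t ++ [n] ∈ L ∧ b ≤ n := by
      intro t
      by_cases ht : t ∈ L
      · obtain ⟨n, hn, hbn⟩ := (hL.2 t ht).exists_gt b
        exact ⟨n, fun _ => ⟨hn, hbn.le⟩⟩
      · exact ⟨0, fun h => absurd h ht⟩
    choose p hp using hn
    obtain ⟨M, hM⟩ := (hfin.image p).bddAbove
    refine ⟨M+1, fun t ht h1 h2 => ⟨p t, (hp t ht).1, (hp t ht).2, ?_⟩⟩
    exact Nat.lt_succ_of_le (hM ⟨t, ⟨h1, h2⟩, rfl⟩)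
  choose N hN using this
  exact ⟨N, hN⟩

theorem laver_box {L : Set (List ℕ)} (hL : IsCompleteLaverTree L) (N F g : ℕ → ℕ)
    (hN : ∀ b, ∀ t ∈ L, t.length ≤ b → (∀ a ∈ t, a ≤ b) →
      ∃ n, t ++ [n] ∈ L ∧ b ≤ n ∧ n < N b) (hF : N ≤ F) :
    ∃ e : (ℕ → Bool) → (ℕ → Bool) → (ℕ → ℕ), (∀ ξ, Function.Injective (e ξ)) ∧
      ∀ ξ η, e ξ η ∈ boxC F g ξ ∧ e ξ η ∈ treeBody L := by
  have hnil : [] ∈ L := by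
    obtain ⟨t, ht⟩ := hL.1.1
    simpa using hL.1.2 t ht 0
  have hbF : ∀ b, b < F b := fun b => by
    obtain ⟨n, -, h1, h2⟩ := hN b [] hnil (by simp) (by simp)
    exact (h1.trans_lt h2).trans_le (hF b)
  have hp : ∀ t b, ∃ n, t ∈ L → t.length ≤ b → (∀ a ∈ t, a ≤ b) →
      t ++ [n] ∈ L ∧ b ≤ n ∧ n < F b := by
    intro t b
    by_cases h : t ∈ L ∧ t.length ≤ b ∧ (∀ a ∈ t, a ≤ b)
    · obtain ⟨n, h1, h2, h3⟩ := hN b t h.1 h.2.1 h.2.2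
      exact ⟨n, fun _ _ _ => ⟨h1, h2, h3.trans_le (hF b)⟩⟩
    · exact ⟨0, fun h1 h2 h3 => absurd ⟨h1, h2, h3⟩ h⟩
  choose p hp using hp
  have main : ∀ z : ℕ → Bool, ∃ x ∈ treeBody L, ∀ m, vseq F g m ≤ x m ∧
      x m < F (F (vseq F g m)) ∧ decide (F (vseq F g m) ≤ x m) = z m := by
    intro z
    let b : ℕ → ℕ := fun m => if z m then F (vseq F g m) else vseq F g m
    let s : ℕ → List ℕ := fun n => Nat.rec [] (fun n l => l ++ [p l (b n)]) n
    have hs : ∀ n, s (n+1) = s n ++ [p (s n) (b n)] := fun n => rfl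
    have hini := ini_of_rec (fun n => p (s n) (b n)) s rfl hs
    have hvb : ∀ m, vseq F g m ≤ b m := by
      intro m
      simp only [b]
      split
      · exact (hbF _).le
      · exact le_rfl
    have hFb : ∀ m, F (b m) ≤ F (F (vseq F g m)) := by
      intro m
      simp only [b]
      split
      · exact le_rfl
      · exact (hbF _).le
    have inv : ∀ m, s m ∈ L ∧ (s m).length = m ∧ ∀ a ∈ s m, a ≤ vseq F g m := by
      intro m
      induction m with
      | zero => exact ⟨hnil, rfl, by simp [s]⟩
      | succ m ih =>
        obtain ⟨i1, i2, i3⟩ := ih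
        obtain ⟨h1, h2, h3⟩ := hp (s m) (b m) i1
          (by rw [i2]; exact (id_le_vseq F g m).trans (hvb m)) (fun a ha => (i3 a ha).trans (hvb m))
        refine ⟨by rw [hs]; exact h1, by rw [hs]; simp [i2], ?_⟩
        intro a ha
        have h4 := vseq_succ F g m
        have h5 := hFb m
        rw [hs, List.mem_append, List.mem_singleton] at ha
        rcases ha with ha | ha
        · have := i3 a ha; omega
        · omega
    refine ⟨fun n => p (s n) (b n), fun n => ?_, fun m => ?_⟩
    · rw [hini]; exact (inv n).1
    · obtain ⟨i1, i2, i3⟩ := inv m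
      obtain ⟨h1, h2, h3⟩ := hp (s m) (b m) i1
          (by rw [i2]; exact (id_le_vseq F g m).trans (hvb m)) (fun a ha => (i3 a ha).trans (hvb m))
      refine ⟨(hvb m).trans h2, h3.trans_le (hFb m), ?_⟩
      cases hz : z m with
      | true =>
        have : b m = F (vseq F g m) := by simp [b, hz]
        simpa [this] using h2
      | false =>
        have : b m = vseq F g m := by simp [b, hz]
        rw [this] at h3
        simpa [this] using h3
  choose x hxL hx using main
  refine ⟨fun ξ η => x (mixb ξ η), fun ξ => ?_, fun ξ η => ⟨⟨fun m => ⟨(hx _ m).1, (hx _ m).2.1⟩,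
    fun n => ?_⟩, hxL _⟩⟩
  · intro η η' h
    apply mixb_inj ξ
    funext m
    rw [← (hx (mixb ξ η) m).2.2, ← (hx (mixb ξ η') m).2.2]
    simp only at h
    rw [h]
  · rw [(hx _ _).2.2, mixb_even]

theorem exists_family : ∃ (J : Type) (C : J × (ℕ → Bool) → Set (ℕ → ℕ)),
    (∀ i, IsClosed (C i)) ∧ (∀ i i' x, x ∈ C i → x ∈ C i' → i = i') ∧
    ∀ L, IsCompleteLaverTree L → ∃ j, ∃ e : (ℕ → Bool) → (ℕ → Bool) → (ℕ → ℕ),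
      (∀ ξ, Function.Injective (e ξ)) ∧ ∀ ξ η, e ξ η ∈ C (j, ξ) ∧ e ξ η ∈ treeBody L := by
  let S : Set Cardinal.{0} := {c | ∃ D : Set (ℕ → ℕ), #D = c ∧ ∀ h : ℕ → ℕ, ∃ d ∈ D, h ≤ d}
  have hS : S.Nonempty := ⟨_, univ, rfl, fun h => ⟨h, mem_univ _, le_rfl⟩⟩
  obtain ⟨D, hD, hdom⟩ := csInf_mem hS
  set κ := sInf S with hκ
  let J : Type := κ.ord.ToType
  have hJ : #J = #D := by rw [hD]; exact mk_ord_toType κ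
  obtain ⟨q⟩ := Cardinal.eq.1 hJ
  let F : J → ℕ → ℕ := fun j => (q j).1
  obtain ⟨G, hG⟩ := tf_choose (J := J) (A := ℕ → ℕ)
    (fun j u g => ∀ i : Iio j, ¬ g ≤ fun m => F i (F i (vseq (F i) (u i) m))) (by
      intro j u
      let B : Set (ℕ → ℕ) := range fun i : Iio j => fun m => F i (F i (vseq (F i) (u i) m))
      have hB : #B < κ := mk_range_le.trans_lt (mk_Iio_toType_ord_lt j)
      have hn := notMem_of_lt_csInf' hB
      by_contra hcon
      push Not at hcon
      refine hn ⟨B, rfl, fun h => ?_⟩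
      obtain ⟨i, hi⟩ := hcon h
      exact ⟨_, ⟨i, rfl⟩, hi⟩)
  have hdisj : ∀ i j, i < j → ∀ ξ ξ' x, x ∈ boxC (F i) (G i) ξ → x ∉ boxC (F j) (G j) ξ' := by
    intro i j hij ξ ξ' x hx hx'
    refine hG j ⟨i, hij⟩ fun m => ?_
    exact ((le_vseq _ _ m).trans (hx'.1 m).1).trans (hx.1 m).2.le
  refine ⟨J, fun i => boxC (F i.1) (G i.1) i.2, fun i => boxC_closed _ _ _, ?_, ?_⟩
  · rintro ⟨i, ξ⟩ ⟨j, ξ'⟩ x hx hx'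
    rcases lt_trichotomy i j with h | h | h
    · exact absurd hx' (hdisj i j h _ _ x hx)
    · subst h
      congr 1
      funext n
      exact (hx.2 n).symm.trans (hx'.2 n)
    · exact absurd hx (hdisj j i h _ _ x hx')
  · intro L hL
    obtain ⟨N, hN⟩ := laver_bound hL
    obtain ⟨d, hd, hNd⟩ := hdom N
    refine ⟨q.symm ⟨d, hd⟩, laver_box hL N (F (q.symm ⟨d, hd⟩)) (G (q.symm ⟨d, hd⟩)) hN ?_⟩
    simpa [F] using hNd

/-- there is X ⊆ ω^ω with X ∈ s₀ and X ∉ cl₀. -/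
theorem stmt2 :
    ∃ X : Set (ℕ → ℕ),
      X ∈ treeIdeal {T | IsSacksTree T} ∧ X ∉ treeIdeal {T | IsCompleteLaverTree T} := by
  obtain ⟨J, C, hCc, hCd, hCL⟩ := exists_family
  let A : Type := (𝔠 : Cardinal.{0}).ord.ToType
  have hA : #A = #(Set (List ℕ)) := by
    rw [show #A = 𝔠 from mk_ord_toType _]
    simp
  obtain ⟨q⟩ := Cardinal.eq.1 hA
  have hsmall : ∀ a : A, #(Iio a) < 𝔠 := fun a => mk_Iio_toType_ord_lt a
  have huniv : IsCompleteLaverTree univ := by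
    refine ⟨⟨⟨[], mem_univ _⟩, fun _ _ _ => mem_univ _⟩, fun t _ => ?_⟩
    simpa [succs] using Set.infinite_univ (α := ℕ)
  obtain ⟨j0, -⟩ := hCL univ huniv
  obtain ⟨G, hG⟩ := tf_choose (J := A) (A := (ℕ → ℕ) × (J × (ℕ → Bool)))
    (fun a u g => IsCompleteLaverTree (q a) → g.1 ∈ C g.2 ∧ g.1 ∈ treeBody (q a) ∧
      (∀ b : Iio a, g.2 ≠ (u b).2) ∧
      ∀ b : Iio a, (C g.2 ∩ treeBody (q b)).Countable → g.1 ∉ treeBody (q b)) (by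
    intro a u
    by_cases hL : IsCompleteLaverTree (q a)
    swap
    · exact ⟨(fun _ => 0, j0, fun _ => false), fun h => absurd h hL⟩
    obtain ⟨j, e, hei, he⟩ := hCL _ hL
    obtain ⟨ξ, hξ⟩ := exists_avoid (E := range fun b : Iio a => (u b).2.2)
      (mk_range_le.trans_lt (hsmall a))
    let E : Set (ℕ → Bool) := ⋃ b : Iio a,
      {η | (C (j, ξ) ∩ treeBody (q b)).Countable ∧ e ξ η ∈ treeBody (q b)}
    have hE : #E < 𝔠 := by
      have hle : #E ≤ #(Iio a) * ℵ₀ := by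
        refine (mk_iUnion_le _).trans (mul_le_mul_right ?_ _)
        refine ciSup_le' fun b => ?_
        rw [le_aleph0_iff_set_countable]
        by_cases hc : (C (j, ξ) ∩ treeBody (q b)).Countable
        · refine (hc.preimage (hei ξ)).mono ?_
          rintro η ⟨-, h⟩
          exact ⟨(he ξ η).1, h⟩
        · convert countable_empty
          ext η
          simp [hc]
      exact hle.trans_lt (mul_lt_of_lt aleph0_le_continuum (hsmall a) aleph0_lt_continuum)
    obtain ⟨η, hη⟩ := exists_avoid hE
    refine ⟨(e ξ η, j, ξ), fun _ => ⟨(he ξ η).1, (he ξ η).2, fun b hb => hξ ⟨b, ?_⟩,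
      fun b hb hmem => hη (mem_iUnion.2 ⟨b, hb, hmem⟩)⟩⟩
    exact (congrArg Prod.snd hb).symm)
  refine ⟨{x | ∃ a, IsCompleteLaverTree (q a) ∧ x = (G a).1}, ?_, ?_⟩
  · intro P hP
    change IsSacksTree P at hP
    set X : Set (ℕ → ℕ) := {x | ∃ a, IsCompleteLaverTree (q a) ∧ x = (G a).1} with hX
    have fin : ∀ P', IsSacksTree P' → P' ⊆ P → #(X ∩ treeBody P' : Set (ℕ → ℕ)) < 𝔠 →
        ∃ Q ∈ {T | IsSacksTree T}, Q ⊆ P ∧ treeBody Q ∩ X = ∅ := by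
      intro P' hP' hPP hc
      obtain ⟨Q, h1, h2, h3⟩ := avoid_small hP' hc
      refine ⟨Q, h1, h2.trans hPP, ?_⟩
      rw [eq_empty_iff_forall_notMem] at h3 ⊢
      rintro x ⟨hxQ, hxX⟩
      exact h3 x ⟨hxQ, hxX, fun n => h2 (hxQ n)⟩
    by_cases hcase : ∃ i, ¬ (C i ∩ treeBody P).Countable
    · obtain ⟨i, hi⟩ := hcase
      obtain ⟨P', h1, h2, h3⟩ := uncountable_tree ((hCc i).inter (isClosed_treeBody P)) hi
        inter_subset_right
      refine fin P' h1 h2 ?_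
      have hsub : (X ∩ treeBody P').Subsingleton := by
        rintro x ⟨⟨a, ha, rfl⟩, hx⟩ y ⟨⟨b, hb, rfl⟩, hy⟩
        have ea := hCd _ _ _ (hG a ha).1 (h3 hx).1
        have eb := hCd _ _ _ (hG b hb).1 (h3 hy).1
        rcases lt_trichotomy a b with h | h | h
        · exact absurd (eb.trans ea.symm) ((hG b hb).2.2.1 ⟨a, h⟩)
        · rw [h]
        · exact absurd (ea.trans eb.symm) ((hG a ha).2.2.1 ⟨b, h⟩)
      exact (le_aleph0_iff_set_countable.2 hsub.countable).trans_lt aleph0_lt_continuum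
    · push Not at hcase
      refine fin P hP subset_rfl ?_
      let c := q.symm P
      have hsub : X ∩ treeBody P ⊆ (fun a => (G a).1) '' (Iio c ∪ {c}) := by
        rintro x ⟨⟨a, ha, rfl⟩, hx⟩
        refine ⟨a, ?_, rfl⟩
        by_contra hac
        have hca : c < a := by
          rcases lt_trichotomy a c with h | h | h
          · exact absurd (Or.inl h) hac
          · exact absurd (Or.inr h) hac
          · exact h
        have hqc : q c = P := q.apply_symm_apply P
        refine (hG a ha).2.2.2 ⟨c, hca⟩ ?_ ?_
        · simpa [hqc] using hcase (G a).2
        · simpa [hqc] using hx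
      refine (mk_le_mk_of_subset hsub).trans_lt (mk_image_le.trans_lt ?_)
      refine (mk_union_le _ _).trans_lt (add_lt_of_lt aleph0_le_continuum (hsmall c) ?_)
      rw [mk_singleton]
      exact one_lt_aleph0.trans aleph0_lt_continuum
  · intro h
    obtain ⟨Q, hQ, -, hQX⟩ := h univ huniv
    change IsCompleteLaverTree Q at hQ
    have hq : q (q.symm Q) = Q := q.apply_symm_apply Q
    have hQ' : IsCompleteLaverTree (q (q.symm Q)) := by rw [hq]; exact hQ
    have h1 := (hG (q.symm Q) hQ').2.1
    rw [hq] at h1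
    rw [eq_empty_iff_forall_notMem] at hQX
    exact hQX _ ⟨h1, q.symm Q, hQ', rfl⟩
end

section
/- There exists a subset of ω^ω which is m-measurable but not cl-measurable, and there exists a subset of ω^ω which is s-measurable but not cl-measurable. -/
open Cardinal Set

def pre (x : ℕ → ℕ) (n : ℕ) : List ℕ := List.ofFn fun i : Fin n => x i

theorem pre_succ (x : ℕ → ℕ) (n : ℕ) : pre x (n+1) = pre x n ++ [x n] := by
  unfold pre
  rw [List.ofFn_succ', List.concat_eq_append]
  simp

theorem pre_zero (x : ℕ → ℕ) : pre x 0 = [] := by simp [pre]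

theorem pre_length (x : ℕ → ℕ) (n : ℕ) : (pre x n).length = n := by simp [pre]

theorem pre_congr {x y : ℕ → ℕ} {n : ℕ} : pre x n = pre y n ↔ ∀ i < n, x i = y i := by
  induction n with
  | zero => simp [pre_zero]
  | succ n ih =>
    rw [pre_succ, pre_succ]
    constructor
    · intro h
      have := List.append_inj' h rfl
      intro i hi
      rcases Nat.lt_succ_iff_lt_or_eq.1 hi with h1 | rfl
      · exact ih.1 this.1 i h1
      · simpa using this.2
    · intro h
      rw [ih.2 (fun i hi => h i (by omega)), h n (by omega)]

theorem pre_take (x : ℕ → ℕ) {m n : ℕ} (h : m ≤ n) : (pre x n).take m = pre x m := by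
  induction n with
  | zero => obtain rfl : m = 0 := by omega
            simp [pre_zero]
  | succ n ih =>
    rcases Nat.lt_or_ge n m with h1 | h1
    · obtain rfl : m = n + 1 := by omega
      rw [List.take_of_length_le]; rw [pre_length]
    · rw [pre_succ, List.take_append_of_le_length (by rw [pre_length]; exact h1), ih h1]

theorem mem_body {T : Set (List ℕ)} {x : ℕ → ℕ} : x ∈ treeBody T ↔ ∀ n, pre x n ∈ T := Iff.rfl

theorem IsTree.nil {T : Set (List ℕ)} (h : IsTree T) : [] ∈ T := by
  obtain ⟨s, hs⟩ := h.1
  simpa using h.2 s hs 0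

theorem IsTree.of_prefix {T : Set (List ℕ)} (h : IsTree T) {s t : List ℕ} (hst : s <+: t)
    (ht : t ∈ T) : s ∈ T := by
  obtain ⟨u, rfl⟩ := hst
  simpa using h.2 _ ht s.length

theorem isTree_of_snoc {T : Set (List ℕ)} (h0 : [] ∈ T) (h : ∀ s n, s ++ [n] ∈ T → s ∈ T) :
    IsTree T := by
  refine ⟨⟨_, h0⟩, fun s => ?_⟩
  induction s using List.reverseRecOn with
  | nil => intro hs n; simpa using hs
  | append_singleton s a ih =>
    intro hs n
    rcases Nat.lt_or_ge s.length n with h1 | h1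
    · rw [List.take_of_length_le (by simp; omega)]; exact hs
    · rw [List.take_append_of_le_length h1]; exact ih (h _ _ hs) n

inductive GT (G : List ℕ → Set ℕ) : List ℕ → Prop
  | nil : GT G []
  | snoc (s : List ℕ) (n : ℕ) : GT G s → n ∈ G s → GT G (s ++ [n])

theorem GT_snoc {G : List ℕ → Set ℕ} {s : List ℕ} {n : ℕ} :
    GT G (s ++ [n]) ↔ GT G s ∧ n ∈ G s := by
  constructor
  · intro h
    generalize hu : s ++ [n] = u at h
    cases h with
    | nil => simp at hu
    | snoc s' n' h1 h2 =>
      have := List.append_inj' hu rfl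
      obtain ⟨rfl, h3⟩ := this
      simp at h3; subst h3; exact ⟨h1, h2⟩
  · rintro ⟨h1, h2⟩; exact GT.snoc _ _ h1 h2

theorem GT_isTree (G : List ℕ → Set ℕ) : IsTree {s | GT G s} :=
  isTree_of_snoc GT.nil fun _ _ h => (GT_snoc.1 h).1

theorem GT_sub {T : Set (List ℕ)} (hT : IsTree T) {G : List ℕ → Set ℕ}
    (hG : ∀ v ∈ T, G v ⊆ succs T v) {s : List ℕ} (h : GT G s) : s ∈ T := by
  induction h with
  | nil => exact hT.nil
  | snoc s n _ h2 ih => exact hG _ ih h2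

theorem succs_GT {G : List ℕ → Set ℕ} {s : List ℕ} (h : GT G s) :
    succs {s | GT G s} s = G s := by
  ext n; simp [succs, GT_snoc, h]

open Classical in
noncomputable def cnt (S : List ℕ → Prop) (v : List ℕ) : ℕ :=
  ((Finset.range v.length).filter fun n => S (v.take n)).card

theorem cnt_nil (S : List ℕ → Prop) : cnt S [] = 0 := by simp [cnt]

open Classical in
theorem cnt_snoc (S : List ℕ → Prop) (v : List ℕ) (n : ℕ) :
    cnt S (v ++ [n]) = cnt S v + if S v then 1 else 0 := by
  unfold cnt
  have : ((Finset.range v.length).filter fun k => S ((v ++ [n]).take k)) =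
      ((Finset.range v.length).filter fun k => S (v.take k)) := by
    apply Finset.filter_congr
    intro k hk
    rw [List.take_append_of_le_length (by simpa using (Finset.mem_range.1 hk).le)]
  rw [List.length_append, List.length_singleton, Finset.range_add_one, Finset.filter_insert, this]
  simp only [List.take_left']
  split_ifs
  · rw [Finset.card_insert_of_notMem (by simp)]
  · simp

theorem exists_step {T : Set (List ℕ)} (hT : IsTree T) {S : List ℕ → Prop}
    (h : ∀ s ∈ T, ∃ t ∈ T, s <+: t ∧ S t) :
    ∃ (step d : List ℕ → ℕ), ∀ v ∈ T, ¬ S v →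
      v ++ [step v] ∈ T ∧ d (v ++ [step v]) < d v := by
  classical
  let D : List ℕ → Set ℕ := fun v => {k | ∃ t, v ++ t ∈ T ∧ S (v ++ t) ∧ t.length = k}
  have key : ∀ v, ∃ n, v ∈ T → ¬ S v → v ++ [n] ∈ T ∧ sInf (D (v ++ [n])) < sInf (D v) := by
    intro v
    by_cases hv : v ∈ T
    swap
    · exact ⟨0, fun h => absurd h hv⟩
    by_cases hs : S v
    · exact ⟨0, fun _ h => absurd hs h⟩
    have hne : (D v).Nonempty := by
      obtain ⟨t, ht, ⟨u, rfl⟩, hS⟩ := h v hv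
      exact ⟨_, u, ht, hS, rfl⟩
    obtain ⟨t, ht, hS, hl⟩ := Nat.sInf_mem hne
    cases t with
    | nil => simp at hS; exact absurd hS hs
    | cons n t =>
      refine ⟨n, fun _ _ => ⟨hT.of_prefix ⟨t, ?_⟩ ht, ?_⟩⟩
      · simp
      · refine lt_of_le_of_lt (Nat.sInf_le (m := t.length) ⟨t, by simpa using ht, by simpa using hS, rfl⟩) ?_
        rw [← hl]; simp
  choose step hstep using key
  exact ⟨step, fun v => sInf (D v), hstep⟩

theorem walk {T : Set (List ℕ)} (hT : IsTree T) {S : List ℕ → Prop} {step d : List ℕ → ℕ}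
    (hst : ∀ v ∈ T, ¬ S v → v ++ [step v] ∈ T ∧ d (v ++ [step v]) < d v)
    {G : List ℕ → Set ℕ} (hG : ∀ v ∈ T, G v ⊆ succs T v)
    (hGs : ∀ v ∈ T, ¬ S v → step v ∈ G v) :
    ∀ k v, d v = k → GT G v → ∃ t, v <+: t ∧ GT G t ∧ S t ∧ cnt S t = cnt S v := by
  intro k
  induction k using Nat.strong_induction_on with
  | _ k ih =>
    intro v hk hv
    by_cases hs : S v
    · exact ⟨v, List.prefix_rfl, hv, hs, rfl⟩
    have hvT := GT_sub hT hG hv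
    obtain ⟨h1, h2⟩ := hst v hvT hs
    obtain ⟨t, ht1, ht2, ht3, ht4⟩ := ih _ (hk ▸ h2) _ rfl (GT.snoc _ _ hv (hGs v hvT hs))
    refine ⟨t, (List.prefix_append _ _).trans ht1, ht2, ht3, ?_⟩
    rw [ht4, cnt_snoc]; simp [hs]

/-- coding lemma -/
theorem avoid (Big : Set ℕ → Prop) (hBig : ∀ X, Big X → X.Nontrivial)
    {T : Set (List ℕ)} (hT : IsTree T)
    (hsp : ∀ s ∈ T, ∃ t ∈ T, s <+: t ∧ Big (succs T t))
    (hnice : ∀ s ∈ T, (succs T s).Subsingleton ∨ Big (succs T s))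
    (A : Set (ℕ → ℕ)) (hA : #(A ∩ treeBody T : Set (ℕ → ℕ)) < 𝔠) :
    ∃ Q : Set (List ℕ), IsTree Q ∧ (∀ s ∈ Q, ∃ t ∈ Q, s <+: t ∧ Big (succs Q t)) ∧ Q ⊆ T ∧
      treeBody Q ∩ A = ∅ := by
  classical
  let S : List ℕ → Prop := fun t => Big (succs T t)
  obtain ⟨step, d, hst⟩ := exists_step (S := S) hT hsp
  have hc : ∀ v, ∃ c : Bool → ℕ, S v → (c true ≠ c false ∧ ∀ b, c b ∈ succs T v) := by
    intro v
    by_cases hv : S v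
    · obtain ⟨a, ha, b, hb, hab⟩ := hBig _ hv
      refine ⟨fun t => if t then a else b, fun _ => ⟨by simpa using hab, ?_⟩⟩
      intro b; cases b <;> simp [ha, hb]
    · exact ⟨fun _ => 0, fun h => absurd h hv⟩
  choose c hc using hc
  let G : (ℕ → Bool) → List ℕ → Set ℕ := fun r v =>
    if S v ∧ Even (cnt S v) then {c v (r (cnt S v / 2))} else succs T v
  have hG : ∀ r, ∀ v ∈ T, G r v ⊆ succs T v := by
    intro r v hv
    by_cases h : S v ∧ Even (cnt S v)
    · simp only [G, if_pos h, singleton_subset_iff]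
      exact (hc v h.1).2 _
    · simp only [G, if_neg h]; exact Subset.rfl
  have hGs : ∀ r, ∀ v ∈ T, ¬ S v → step v ∈ G r v := by
    intro r v hv hs
    simp only [G, if_neg (fun h : S v ∧ Even (cnt S v) => hs h.1)]
    exact (hst v hv hs).1
  have hwalk := fun r v => walk hT hst (hG r) (hGs r) (d v) v rfl
  have hbig : ∀ r, ∀ s ∈ {s | GT (G r) s}, ∃ t ∈ {s | GT (G r) s}, s <+: t ∧
      Big (succs {s | GT (G r) s} t) := by
    intro r s hs
    have fin : ∀ t, GT (G r) t → S t → ¬ Even (cnt S t) → Big (succs {s | GT (G r) s} t) := by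
      intro t ht h1 h2
      rw [succs_GT ht]
      simp only [G, if_neg (fun h : S t ∧ Even (cnt S t) => h2 h.2)]
      exact h1
    obtain ⟨t, h1, h2, h3, h4⟩ := hwalk r s hs
    by_cases he : Even (cnt S t)
    · have h5 : GT (G r) (t ++ [c t (r (cnt S t / 2))]) := by
        refine GT.snoc _ _ h2 ?_
        simp only [G, if_pos (⟨h3, he⟩ : S t ∧ Even (cnt S t))]; rfl
      obtain ⟨t', h1', h2', h3', h4'⟩ := hwalk r _ h5
      refine ⟨t', h2', h1.trans ((List.prefix_append _ _).trans h1'), fin t' h2' h3' ?_⟩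
      rw [h4', cnt_snoc, if_pos h3]
      exact Nat.not_even_iff_odd.2 he.add_one
    · exact ⟨t, h2, h1, fin t h2 h3 he⟩
  by_contra hno
  push Not at hno
  have hmeet : ∀ r, ∃ x, x ∈ treeBody {s | GT (G r) s} ∩ A := fun r =>
    hno _ (GT_isTree _) (hbig r) (fun s hs => GT_sub hT (hG r) hs)
  choose x hx using hmeet
  have hxT : ∀ r n, pre (x r) n ∈ T := fun r n => GT_sub hT (hG r) ((hx r).1 n)
  have hw2 : ∀ (r) (k n : ℕ), d (pre (x r) n) = k →
      ∃ m, S (pre (x r) m) ∧ cnt S (pre (x r) m) = cnt S (pre (x r) n) := by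
    intro r k
    induction k using Nat.strong_induction_on with
    | _ k ih =>
      intro n hk
      by_cases hs : S (pre (x r) n)
      · exact ⟨n, hs, rfl⟩
      obtain ⟨h1, h2⟩ := hst _ (hxT r n) hs
      have h3 : x r n = step (pre (x r) n) := by
        refine ((hnice _ (hxT r n)).resolve_right hs) ?_ h1
        have := hxT r (n+1)
        rw [pre_succ] at this; exact this
      rw [← h3, ← pre_succ] at h2
      obtain ⟨m, hm1, hm2⟩ := ih _ (hk ▸ h2) (n+1) rfl
      refine ⟨m, hm1, ?_⟩
      rw [hm2, pre_succ, cnt_snoc, if_neg hs]; rfl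
  have hall : ∀ r j, ∃ n, S (pre (x r) n) ∧ cnt S (pre (x r) n) = j := by
    intro r j
    induction j with
    | zero =>
      obtain ⟨m, h1, h2⟩ := hw2 r _ 0 rfl
      exact ⟨m, h1, by rw [h2, pre_zero, cnt_nil]⟩
    | succ j ih =>
      obtain ⟨n, h1, h2⟩ := ih
      obtain ⟨m, h3, h4⟩ := hw2 r _ (n+1) rfl
      exact ⟨m, h3, by rw [h4, pre_succ, cnt_snoc, if_pos h1, h2]⟩
  have hinj : Function.Injective x := by
    intro r r' h
    funext j
    obtain ⟨n, h1, h2⟩ := hall r (2*j)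
    have e : ∀ r', x r' = x r → x r n = c (pre (x r) n) (r' j) := by
      intro r' h
      have h3 : pre (x r') (n+1) ∈ {s | GT (G r') s} := (hx r').1 (n+1)
      rw [h, pre_succ] at h3
      have h4 := (GT_snoc.1 h3).2
      simp only [G] at h4
      rw [if_pos ⟨h1, by rw [h2]; simp⟩, h2] at h4
      simpa using h4
    have e1 := e r rfl
    have e2 := e r' h.symm
    have h5 := (hc _ h1).1
    rw [e1] at e2
    cases hr : r j <;> cases hr' : r' j <;> simp_all
  have : 𝔠 ≤ #(A ∩ treeBody T : Set (ℕ → ℕ)) := by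
    have h1 : #(ℕ → Bool) = 𝔠 := by simp
    rw [← h1]
    exact Cardinal.mk_le_of_injective (f := fun r => (⟨x r, (hx r).2, hxT r⟩ : (A ∩ treeBody T : Set (ℕ → ℕ))))
      (fun r r' h => hinj (congrArg Subtype.val h))
  exact absurd hA (not_lt.2 this)

theorem exists_sparse {X : Set ℕ} (hX : X.Infinite) (f : ℕ → ℕ) :
    ∃ J ⊆ X, J.Infinite ∧ ∀ i ∈ J, ∀ j ∈ J, i < j → f i < j := by
  have h : ∀ a : ℕ, ∃ b ∈ X, a < b ∧ f a < b := by
    intro a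
    obtain ⟨b, hb, h⟩ := hX.exists_gt (max a (f a))
    exact ⟨b, hb, lt_of_le_of_lt (le_max_left _ _) h, lt_of_le_of_lt (le_max_right _ _) h⟩
  choose g hg1 hg2 hg3 using h
  let e : ℕ → ℕ := fun n => Nat.rec (g 0) (fun _ a => g a) n
  have es : ∀ n, e (n+1) = g (e n) := fun _ => rfl
  have hmono : StrictMono e := strictMono_nat_of_lt_succ fun n => by rw [es]; exact hg2 _
  refine ⟨range e, ?_, infinite_range_of_injective hmono.injective, ?_⟩
  · rintro _ ⟨n, rfl⟩
    cases n with
    | zero => exact hg1 _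
    | succ n => exact hg1 _
  · rintro _ ⟨n, rfl⟩ _ ⟨m, rfl⟩ h
    have : n + 1 ≤ m := hmono.lt_iff_lt.1 h
    exact lt_of_lt_of_le (by rw [es]; exact hg3 _) (hmono.monotone this)

theorem first_diff {α : Type} {x y : ℕ → α} (h : x ≠ y) :
    ∃ n, (∀ i < n, x i = y i) ∧ x n ≠ y n := by
  classical
  have h' : ∃ n, x n ≠ y n := by
    by_contra hn; push Not at hn; exact h (funext hn)
  exact ⟨Nat.find h', fun i hi => by simpa using Nat.find_min h' hi, Nat.find_spec h'⟩

theorem sparse_miller {P : Set (List ℕ)} (hP : IsMillerTree P) :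
    ∃ Q ⊆ P, IsMillerTree Q ∧ (∀ s ∈ Q, (succs Q s).Subsingleton ∨ (succs Q s).Infinite) ∧
      ∀ x ∈ treeBody Q, ∀ y ∈ treeBody Q, ∀ n, (∀ i < n, x i = y i) → x n < y n →
        x (n+1) < y n := by
  classical
  obtain ⟨hT, hsp⟩ := hP
  let S : List ℕ → Prop := fun t => (succs P t).Infinite
  obtain ⟨step, d, hst⟩ := exists_step (S := S) hT hsp
  have hm : ∀ v, ∃ m, S v → m ∈ succs P v := by
    intro v
    by_cases h : S v
    · obtain ⟨m, hm⟩ := h.nonempty; exact ⟨m, fun _ => hm⟩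
    · exact ⟨0, fun h' => absurd h' h⟩
  choose m hm using hm
  let nx : List ℕ → ℕ := fun v => if S v then m v else step v
  have hnx : ∀ v ∈ P, nx v ∈ succs P v := by
    intro v hv
    by_cases h : S v
    · simp only [nx, if_pos h]; exact hm v h
    · simp only [nx, if_neg h]; exact (hst v hv h).1
  have hJ : ∀ v, ∃ J, S v → J ⊆ succs P v ∧ J.Infinite ∧
      ∀ i ∈ J, ∀ j ∈ J, i < j → nx (v ++ [i]) < j := by
    intro v
    by_cases h : S v
    · obtain ⟨J, h1, h2, h3⟩ := exists_sparse h (fun i => nx (v ++ [i]))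
      exact ⟨J, fun _ => ⟨h1, h2, h3⟩⟩
    · exact ⟨∅, fun h' => absurd h' h⟩
  choose J hJ using hJ
  let G : List ℕ → Set ℕ := fun v => if S v ∧ Even (cnt S v) then J v else {nx v}
  have Gpos : ∀ v, S v → Even (cnt S v) → G v = J v := fun v h1 h2 => if_pos ⟨h1, h2⟩
  have Gneg : ∀ v, ¬ (S v ∧ Even (cnt S v)) → G v = {nx v} := fun v h => if_neg h
  have hG : ∀ v ∈ P, G v ⊆ succs P v := by
    intro v hv
    by_cases h : S v ∧ Even (cnt S v)
    · rw [Gpos v h.1 h.2]; exact (hJ v h.1).1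
    · rw [Gneg v h, singleton_subset_iff]; exact hnx v hv
  have hGs : ∀ v ∈ P, ¬ S v → step v ∈ G v := by
    intro v hv hs
    rw [Gneg v (fun h => hs h.1)]
    simp [nx, if_neg hs]
  have hwalk := fun v => walk hT hst hG hGs (d v) v rfl
  refine ⟨{s | GT G s}, fun s hs => GT_sub hT hG hs, ⟨GT_isTree G, ?_⟩, ?_, ?_⟩
  · intro s hs
    have fin : ∀ t, GT G t → S t → Even (cnt S t) → (succs {s | GT G s} t).Infinite := by
      intro t ht h1 h2
      rw [succs_GT ht, Gpos t h1 h2]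
      exact (hJ t h1).2.1
    obtain ⟨t, h1, h2, h3, h4⟩ := hwalk s hs
    by_cases he : Even (cnt S t)
    · exact ⟨t, h2, h1, fin t h2 h3 he⟩
    · have h5 : GT G (t ++ [nx t]) := by
        refine GT.snoc _ _ h2 ?_
        rw [Gneg t (fun h => he h.2)]; rfl
      obtain ⟨t', h1', h2', h3', h4'⟩ := hwalk _ h5
      refine ⟨t', h2', h1.trans ((List.prefix_append _ _).trans h1'), fin t' h2' h3' ?_⟩
      rw [h4', cnt_snoc, if_pos h3]
      exact (Nat.not_even_iff_odd.1 he).add_one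
  · intro s hs
    rw [succs_GT hs]
    by_cases h : S s ∧ Even (cnt S s)
    · right; rw [Gpos s h.1 h.2]; exact (hJ s h.1).2.1
    · left; rw [Gneg s h]; exact subsingleton_singleton
  · intro x hx y hy n hxy hlt
    have e : pre y n = pre x n := (pre_congr.2 hxy).symm
    have hx1 : GT G (pre x (n+1)) := hx (n+1)
    have hx2 : GT G (pre x (n+1+1)) := hx (n+1+1)
    have hy1 : GT G (pre y (n+1)) := hy (n+1)
    rw [pre_succ] at hx2
    have h2 := (GT_snoc.1 hx2).2
    rw [pre_succ] at hx1 h2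
    rw [pre_succ, e] at hy1
    have h1 := (GT_snoc.1 hx1).2
    have h3 := (GT_snoc.1 hy1).2
    have hE : S (pre x n) ∧ Even (cnt S (pre x n)) := by
      by_contra h
      rw [Gneg _ h] at h1 h3
      simp only [mem_singleton_iff] at h1 h3
      omega
    rw [Gneg _ (by
      rintro ⟨_, h⟩
      rw [cnt_snoc, if_pos hE.1] at h
      exact (Nat.not_even_iff_odd.2 hE.2.add_one) h)] at h2
    rw [Gpos _ hE.1 hE.2] at h1 h3
    rw [mem_singleton_iff.1 h2]
    exact (hJ _ hE.1).2.2 _ h1 _ h3 hlt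

/-- Cantor-Bendixson for closed subsets of the Baire space -/
theorem perfect_kernel {C : Set (ℕ → ℕ)}
    (hcl : ∀ x, (∀ n, ∃ y ∈ C, ∀ i < n, y i = x i) → x ∈ C) (hC : ¬ C.Countable) :
    ∃ K, IsSacksTree K ∧ treeBody K ⊆ C ∧ ∀ s ∈ K, ∃ x ∈ C, ∃ n, pre x n = s := by
  let Y : List ℕ → Set (ℕ → ℕ) := fun s => {x | x ∈ C ∧ pre x s.length = s}
  have hne : ∀ s, ¬ (Y s).Countable → ∃ x ∈ C, pre x s.length = s := by
    intro s hs
    by_contra h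
    apply hs
    have : Y s = ∅ := by
      ext x; simp only [Y, mem_ofPred_eq, mem_empty_iff_false, iff_false]
      exact fun hx => h ⟨x, hx⟩
    rw [this]; exact countable_empty
  refine ⟨{s | ¬ (Y s).Countable}, ⟨isTree_of_snoc ?_ ?_, ?_⟩, ?_, ?_⟩
  · simpa [Y, pre_zero] using hC
  · intro s n hs hs'
    refine hs (hs'.mono ?_)
    rintro x ⟨hx, h⟩
    refine ⟨hx, ?_⟩
    rw [List.length_append, List.length_singleton, pre_succ] at h
    exact (List.append_inj' h rfl).1
  · intro s hs
    by_contra hno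
    push Not at hno
    apply hs
    have hsub : Y s ⊆ (⋃ t ∈ {t : List ℕ | (Y t).Countable}, Y t) ∪
        {x | x ∈ Y s ∧ ∀ n, ¬ (Y (pre x n)).Countable} := by
      intro x hx
      by_cases h : ∀ n, ¬ (Y (pre x n)).Countable
      · exact Or.inr ⟨hx, h⟩
      · push Not at h
        obtain ⟨n, hn⟩ := h
        left
        simp only [mem_iUnion]
        exact ⟨pre x n, hn, hx.1, by rw [pre_length]⟩
    refine Countable.mono hsub (Countable.union ?_ ?_)
    · exact (to_countable _).biUnion fun t ht => ht
    · apply Set.Subsingleton.countable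
      rintro x ⟨hx, hx'⟩ y ⟨hy, hy'⟩
      by_contra hxy
      obtain ⟨n, h1, h2⟩ := first_diff hxy
      have hn : s.length ≤ n := by
        by_contra hn
        push Not at hn
        exact h2 (pre_congr.1 (hx.2.trans hy.2.symm) n hn)
      refine h2 (hno (pre x n) (hx' n) ?_ ?_ ?_)
      · rw [← hx.2, ← pre_take x hn]; exact List.take_prefix _ _
      · show ¬ (Y (pre x n ++ [x n])).Countable
        rw [← pre_succ]; exact hx' _
      · show ¬ (Y (pre x n ++ [y n])).Countable
        rw [pre_congr.2 h1, ← pre_succ]; exact hy' _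
  · intro x hx
    refine hcl x fun n => ?_
    obtain ⟨y, hy, h⟩ := hne _ (hx n)
    change pre y (pre x n).length = pre x n at h
    rw [pre_length] at h
    exact ⟨y, hy, pre_congr.1 h⟩
  · intro s hs
    obtain ⟨x, hx, h⟩ := hne _ hs
    exact ⟨x, hx, _, h⟩

theorem level_mono (X : ℕ → Set ℕ) (hX : ∀ i, (X i).Infinite) (B : ℕ) :
    ∃ w : ℕ → ℕ, StrictMono w ∧ ∀ i, w i ∈ X i ∧ B < w i := by
  have h : ∀ i a : ℕ, ∃ b ∈ X i, a < b := fun i a => by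
    obtain ⟨b, hb, h⟩ := (hX i).exists_gt a
    exact ⟨b, hb, h⟩
  choose g hg1 hg2 using h
  let e : ℕ → ℕ := fun n => Nat.rec (g 0 B) (fun i a => g (i+1) a) n
  have es : ∀ n, e (n+1) = g (n+1) (e n) := fun _ => rfl
  have hmono : StrictMono e := strictMono_nat_of_lt_succ fun n => by rw [es]; exact hg2 _ _
  refine ⟨e, hmono, fun i => ⟨?_, lt_of_lt_of_le (hg2 0 B) (hmono.monotone (Nat.zero_le i))⟩⟩
  cases i with
  | zero => exact hg1 _ _
  | succ n => exact hg1 _ _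

theorem level (X : ℕ → Set ℕ) (hX : ∀ i, (X i).Infinite) (B M : ℕ) (ρ : Prop) :
    ∃ v : ℕ → ℕ, (∀ i, v i ∈ X i ∧ B < v i) ∧
      ∀ i j, i < j → j < M → v i ≠ v j ∧ (v i < v j ↔ ρ) := by
  obtain ⟨w, hw, h⟩ := level_mono X hX B
  by_cases hρ : ρ
  · exact ⟨w, h, fun i j hij _ => ⟨(hw hij).ne, by simp [hρ, hw hij]⟩⟩
  · obtain ⟨u, hu, h'⟩ := level_mono (fun i => X (M - 1 - i)) (fun i => hX _) B
    refine ⟨fun i => if i < M then u (M - 1 - i) else w i, fun i => ?_, fun i j hij hj => ?_⟩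
    · dsimp only
      split_ifs with hi
      · have := h' (M - 1 - i)
        rwa [show M - 1 - (M - 1 - i) = i by omega] at this
      · exact h i
    · have := hu (show M - 1 - j < M - 1 - i by omega)
      simp only [if_pos hj, if_pos (hij.trans hj)]
      refine ⟨this.ne', by simp only [hρ, iff_false]; omega⟩

def idx (z : ℕ → Bool) : ℕ → ℕ
  | 0 => 0
  | n+1 => 2 * idx z n + (if z n then 1 else 0)

theorem idx_lt (z : ℕ → Bool) (n : ℕ) : idx z n < 2 ^ n := by
  induction n with
  | zero => simp [idx]
  | succ n ih => simp only [idx, pow_succ]; split_ifs <;> omega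

theorem idx_div (z : ℕ → Bool) (n : ℕ) : idx z (n+1) / 2 = idx z n := by
  simp only [idx]; split_ifs <;> omega

theorem idx_congr {z z' : ℕ → Bool} {n : ℕ} (h : ∀ i < n, z i = z' i) : idx z n = idx z' n := by
  induction n with
  | zero => rfl
  | succ n ih => simp only [idx]; rw [ih fun i hi => h i (by omega), h n (by omega)]

theorem idx_mono {z z' : ℕ → Bool} {n : ℕ} (h : ∀ i < n, z i = z' i) (h1 : z n = false)
    (h2 : z' n = true) {m : ℕ} (hm : n + 1 ≤ m) : idx z m < idx z' m := by
  induction m, hm using Nat.le_induction with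
  | base => simp [idx, idx_congr h, h1, h2]
  | succ m _ ih => simp only [idx]; split_ifs <;> omega

theorem exists_Z {T : Set (List ℕ)} (hT : IsCompleteLaverTree T) (ρ : ℕ → Prop) :
    ∃ F : (ℕ → Bool) → (ℕ → ℕ), (∀ z, F z ∈ treeBody T) ∧
      (∀ z z' n, (∀ i < n + 1, z i = z' i) → F z n = F z' n) ∧
      (∀ z z' n, (∀ i < n, z i = z' i) → z n = false → z' n = true → ∀ m, n ≤ m →
        F z m ≠ F z' m ∧ (F z m < F z' m ↔ ρ m)) ∧
      ∀ z z' n, F z n < F z' (n+1) := by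
  classical
  have hlev : ∀ (n : ℕ) (p : {t : ℕ → List ℕ // ∀ i, t i ∈ T} × ℕ), ∃ v : ℕ → ℕ,
      (∀ i, v i ∈ succs T (p.1.1 (i / 2)) ∧ p.2 < v i) ∧
      ∀ i j, i < j → j < 2 ^ (n+1) → v i ≠ v j ∧ (v i < v j ↔ ρ n) := fun n p =>
    level (fun i => succs T (p.1.1 (i / 2))) (fun i => hT.2 _ (p.1.2 _)) p.2 _ _
  choose V hV1 hV2 using hlev
  let st : ℕ → {t : ℕ → List ℕ // ∀ i, t i ∈ T} × ℕ := fun n =>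
    Nat.rec (⟨fun _ => [], fun _ => hT.1.nil⟩, 0)
      (fun n p => (⟨fun i => p.1.1 (i / 2) ++ [V n p i], fun i => (hV1 n p i).1⟩,
        (Finset.range (2 ^ (n+1))).sup (V n p))) n
  have st1 : ∀ n i, (st (n+1)).1.1 i = (st n).1.1 (i / 2) ++ [V n (st n) i] := fun _ _ => rfl
  have st2 : ∀ n, (st (n+1)).2 = (Finset.range (2 ^ (n+1))).sup (V n (st n)) := fun _ => rfl
  refine ⟨fun z n => V n (st n) (idx z (n+1)), ?_, ?_, ?_, ?_⟩
  · intro z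
    rw [mem_body]
    intro n
    have : pre (fun n => V n (st n) (idx z (n+1))) n = (st n).1.1 (idx z n) := by
      induction n with
      | zero => rfl
      | succ n ih => rw [pre_succ, st1, idx_div, ih]
    rw [this]; exact (st n).1.2 _
  · intro z z' n h
    simp only [idx_congr h]
  · intro z z' n h h1 h2 m hm
    exact hV2 m _ _ _ (idx_mono h h1 h2 (by omega)) (idx_lt _ _)
  · intro z z' n
    refine lt_of_le_of_lt ?_ (hV1 (n+1) (st (n+1)) _).2
    rw [st2]
    exact Finset.le_sup (f := V n (st n)) (Finset.mem_range.2 (idx_lt z (n+1)))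

def rho (T : Set (List ℕ)) (m : ℕ) : Prop :=
  m.unpair.1 = 0 ∨ ∃ l ∈ T, Encodable.encode l + 1 = m.unpair.1

theorem rho_zero (T : Set (List ℕ)) (j : ℕ) : rho T (Nat.pair 0 j) := by simp [rho]

theorem rho_succ (T : Set (List ℕ)) (l : List ℕ) (j : ℕ) :
    rho T (Nat.pair (Encodable.encode l + 1) j) ↔ l ∈ T := by
  simp [rho]

structure IsZ (T : Set (List ℕ)) (F : (ℕ → Bool) → (ℕ → ℕ)) : Prop where
  body : ∀ z, F z ∈ treeBody T
  loc : ∀ z z' n, (∀ i < n + 1, z i = z' i) → F z n = F z' n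
  ord : ∀ z z' n, (∀ i < n, z i = z' i) → z n = false → z' n = true → ∀ m, n ≤ m →
        F z m ≠ F z' m ∧ (F z m < F z' m ↔ rho T m)
  grow : ∀ z z' n, F z n < F z' (n+1)

theorem IsZ.loc' {T F} (h : IsZ T F) {z z' : ℕ → Bool} {n : ℕ}
    (hh : ∀ i < n, F z i = F z' i) : ∀ i < n, z i = z' i := by
  by_contra hne
  have hzz : z ≠ z' := fun e => hne (fun i _ => by rw [e])
  obtain ⟨k, h1, h2⟩ := first_diff hzz
  have hk : k < n := by
    by_contra hk
    exact hne fun i hi => h1 i (by omega)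
  cases hz : z k <;> cases hz' : z' k
  · simp [hz, hz'] at h2
  · exact (h.ord z z' k h1 hz hz' k le_rfl).1 (hh k hk)
  · exact (h.ord z' z k (fun i hi => (h1 i hi).symm) hz' hz k le_rfl).1 (hh k hk).symm
  · simp [hz, hz'] at h2

theorem IsZ.inj {T F} (h : IsZ T F) : Function.Injective F := by
  intro z z' e
  funext i
  exact h.loc' (n := i + 1) (fun j _ => by rw [e]) i (by omega)

theorem IsZ.closed {T F} (h : IsZ T F) :
    ∀ x, (∀ n, ∃ y ∈ range F, ∀ i < n, y i = x i) → x ∈ range F := by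
  intro x hx
  have hx' : ∀ n, ∃ z, ∀ i < n, F z i = x i := by
    intro n
    obtain ⟨_, ⟨z, rfl⟩, h⟩ := hx n
    exact ⟨z, h⟩
  choose z hz using hx'
  refine ⟨fun n => z (n+1) n, ?_⟩
  funext n
  rw [← hz (n+1) n (by omega)]
  refine h.loc _ _ _ fun i hi => ?_
  refine h.loc' (n := i + 1) (fun j hj => ?_) i (by omega)
  rw [hz (i+1) j hj, hz (n+1) j (by omega)]

theorem IsZ.ad {T F T' F'} (h : IsZ T F) (h' : IsZ T' F') (hne : T ≠ T') :
    (range F ∩ range F').Subsingleton := by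
  have key : ∀ z1 z2 w1 w2, F z1 = F' w1 → F z2 = F' w2 → ∀ n, (∀ i < n, z1 i = z2 i) →
      z1 n = false → z2 n = true → False := by
    intro z1 z2 w1 w2 e1 e2 n hn hf ht
    have ho := h.ord z1 z2 n hn hf ht
    have hw : w1 ≠ w2 := by
      rintro rfl
      exact (ho n le_rfl).1 (by rw [e1, e2])
    obtain ⟨k, hk, hk2⟩ := first_diff hw
    have case1 : w1 k = false → w2 k = true → False := by
      intro a b
      have ho' := h'.ord w1 w2 k hk a b
      apply hne
      ext l
      have hp : max n k ≤ Nat.pair (Encodable.encode l + 1) (max n k) := Nat.right_le_pair _ _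
      have p1 := (ho _ ((le_max_left _ _).trans hp)).2
      have p2 := (ho' _ ((le_max_right _ _).trans hp)).2
      rw [e1, e2] at p1
      rw [← rho_succ T l (max n k), ← rho_succ T' l (max n k), ← p1, ← p2]
    have case2 : w2 k = false → w1 k = true → False := by
      intro a b
      have ho' := h'.ord w2 w1 k (fun i hi => (hk i hi).symm) a b
      have hp : max n k ≤ Nat.pair 0 (max n k) := Nat.right_le_pair _ _
      have p1 := (ho _ ((le_max_left _ _).trans hp)).2.2 (rho_zero _ _)
      have p2 := (ho' _ ((le_max_right _ _).trans hp)).2.2 (rho_zero _ _)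
      rw [e1, e2] at p1
      omega
    cases hz : w1 k <;> cases hz' : w2 k
    · simp [hz, hz'] at hk2
    · exact case1 hz hz'
    · exact case2 hz' hz
    · simp [hz, hz'] at hk2
  rintro _ ⟨⟨z1, rfl⟩, ⟨w1, e1⟩⟩ _ ⟨⟨z2, rfl⟩, ⟨w2, e2⟩⟩
  by_contra hd
  have hz : z1 ≠ z2 := by rintro rfl; exact hd rfl
  obtain ⟨n, h1, h2⟩ := first_diff hz
  cases hz : z1 n <;> cases hz' : z2 n
  · simp [hz, hz'] at h2
  · exact key z1 z2 w1 w2 e1.symm e2.symm n h1 hz hz'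
  · exact key z2 z1 w2 w1 e2.symm e1.symm n (fun i hi => (h1 i hi).symm) hz' hz
  · simp [hz, hz'] at h2

theorem exists_A : ∃ A : Set (ℕ → ℕ),
    (∀ P, IsSacksTree P → ∃ Q, IsSacksTree Q ∧ Q ⊆ P ∧ treeBody Q ∩ A = ∅) ∧
    (∀ P, IsMillerTree P → ∃ Q, IsMillerTree Q ∧ Q ⊆ P ∧ treeBody Q ∩ A = ∅) ∧
    (∀ T, IsCompleteLaverTree T → ¬ treeBody T ⊆ A ∧ (treeBody T ∩ A).Nonempty) := by
  classical
  have hZ : ∀ T, ∃ F, IsCompleteLaverTree T → IsZ T F := by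
    intro T
    by_cases hT : IsCompleteLaverTree T
    · obtain ⟨F, h1, h2, h3, h4⟩ := exists_Z hT (rho T)
      exact ⟨F, fun _ => ⟨h1, h2, h3, h4⟩⟩
    · exact ⟨fun _ _ => 0, fun h => absurd h hT⟩
  choose F hF using hZ
  have hI : #(Set (List ℕ)) = 𝔠 := by
    rw [Cardinal.mk_set, Cardinal.mk_eq_aleph0, Cardinal.two_power_aleph0]
  obtain ⟨r, wo, hr⟩ := Cardinal.ord_eq (Set (List ℕ))
  have hlt : ∀ T, #{U | r U T} < 𝔠 := by
    intro T
    have := Ordinal.typein_lt_type r T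
    rw [← hr, hI, Cardinal.lt_ord] at this
    exact this
  let Fam : Set (Set (List ℕ)) :=
    {P | ∀ T, IsCompleteLaverTree T → (range (F T) ∩ treeBody P).Countable}
  let Bad : Set (List ℕ) → Set (List ℕ) → Set (ℕ → ℕ) := fun T U =>
    (if IsCompleteLaverTree U then range (F T) ∩ range (F U) else ∅) ∪
    (if U ∈ Fam then range (F T) ∩ treeBody U else ∅)
  have hBad : ∀ T, IsCompleteLaverTree T → ∀ U, r U T → (Bad T U).Countable := by
    intro T hT U hU
    refine Countable.union ?_ ?_
    · split_ifs with h
      · refine ((hF T hT).ad (hF U h) ?_).countable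
        rintro rfl
        exact irrefl_of r T hU
      · exact countable_empty
    · split_ifs with h
      · exact h T hT
      · exact countable_empty
  have hx : ∀ T, ∃ x, IsCompleteLaverTree T → x ∈ range (F T) ∧ ∀ U, r U T → x ∉ Bad T U := by
    intro T
    by_cases hT : IsCompleteLaverTree T
    swap
    · exact ⟨0, fun h => absurd h hT⟩
    by_contra hno
    have hsub : range (F T) ⊆ ⋃ U : {U | r U T}, Bad T U := by
      intro x hx
      by_contra hx'
      refine hno ⟨x, fun _ => ⟨hx, fun U hU hb => hx' (mem_iUnion.2 ⟨⟨U, hU⟩, hb⟩)⟩⟩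
    have h1 : #(range (F T)) = 𝔠 := by
      rw [Cardinal.mk_range_eq _ (hF T hT).inj]; simp
    have h2 : #(⋃ U : {U | r U T}, Bad T U) < 𝔠 := by
      refine lt_of_le_of_lt (Cardinal.mk_iUnion_le _) ?_
      refine Cardinal.mul_lt_of_lt Cardinal.aleph0_le_continuum (hlt T) ?_
      refine lt_of_le_of_lt (ciSup_le' fun U => ?_) Cardinal.aleph0_lt_continuum
      exact (hBad T hT U U.2).le_aleph0
    exact absurd (Cardinal.mk_le_mk_of_subset hsub) (by rw [h1]; exact not_le.2 h2)
  choose x hx using hx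
  let A : Set (ℕ → ℕ) := x '' {T | IsCompleteLaverTree T}
  have hle : ∀ U, #(x '' ({T | r T U} ∪ {U}) : Set (ℕ → ℕ)) < 𝔠 := by
    intro U
    refine lt_of_le_of_lt Cardinal.mk_image_le ?_
    refine lt_of_le_of_lt (Cardinal.mk_union_le _ _) ?_
    refine Cardinal.add_lt_of_lt Cardinal.aleph0_le_continuum (hlt U) ?_
    simpa using Cardinal.one_lt_aleph0.trans Cardinal.aleph0_lt_continuum
  have hsmall : ∀ U (W : Set (ℕ → ℕ)), (∀ T, IsCompleteLaverTree T → r U T → x T ∉ W) →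
      #(A ∩ W : Set (ℕ → ℕ)) < 𝔠 := by
    intro U W h
    refine lt_of_le_of_lt (Cardinal.mk_le_mk_of_subset ?_) (hle U)
    rintro _ ⟨⟨T, hT, rfl⟩, hW⟩
    refine ⟨T, ?_, rfl⟩
    rcases trichotomous_of r T U with h1 | h1 | h1
    · exact Or.inl h1
    · exact Or.inr h1
    · exact absurd hW (h T hT h1)
  have hs1 : ∀ U ∈ Fam, #(A ∩ treeBody U : Set (ℕ → ℕ)) < 𝔠 := by
    intro U hU
    refine hsmall U _ fun T hT hr hW => (hx T hT).2 U hr (Or.inr ?_)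
    rw [if_pos hU]; exact ⟨(hx T hT).1, hW⟩
  have hs2 : ∀ U, IsCompleteLaverTree U → #(A ∩ range (F U) : Set (ℕ → ℕ)) < 𝔠 := by
    intro U hU
    refine hsmall U _ fun T hT hr hW => (hx T hT).2 U hr (Or.inl ?_)
    rw [if_pos hU]; exact ⟨(hx T hT).1, hW⟩
  refine ⟨A, ?_, ?_, ?_⟩
  · have main : ∀ P, IsSacksTree P → #(A ∩ treeBody P : Set (ℕ → ℕ)) < 𝔠 →
        ∃ Q, IsSacksTree Q ∧ Q ⊆ P ∧ treeBody Q ∩ A = ∅ := by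
      intro P hP hA
      obtain ⟨Q, h1, h2, h3, h4⟩ := avoid Set.Nontrivial (fun _ h => h) hP.1 hP.2
        (fun s _ => Set.subsingleton_or_nontrivial _) A hA
      exact ⟨Q, ⟨h1, h2⟩, h3, h4⟩
    intro P hP
    by_cases hPF : P ∈ Fam
    · exact main P hP (hs1 P hPF)
    · have : ∃ T, IsCompleteLaverTree T ∧ ¬ (range (F T) ∩ treeBody P).Countable := by
        by_contra h
        push Not at h
        exact hPF h
      obtain ⟨T, hT, hunc⟩ := this
      obtain ⟨K, hK, hK1, hK2⟩ := perfect_kernel (C := range (F T) ∩ treeBody P) (by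
        intro y hy
        refine ⟨(hF T hT).closed y fun n => ?_, fun n => ?_⟩
        · obtain ⟨w, hw, h⟩ := hy n
          exact ⟨w, hw.1, h⟩
        · obtain ⟨w, hw, h⟩ := hy n
          change pre y n ∈ P
          rw [← pre_congr.2 h]; exact hw.2 n) hunc
      have hKP : K ⊆ P := by
        intro s hs
        obtain ⟨y, hy, n, rfl⟩ := hK2 s hs
        exact hy.2 n
      have hsubK : A ∩ treeBody K ⊆ A ∩ range (F T) := fun y hy => ⟨hy.1, (hK1 hy.2).1⟩
      obtain ⟨Q, h1, h2, h3⟩ := main K hK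
        (lt_of_le_of_lt (Cardinal.mk_le_mk_of_subset hsubK) (hs2 T hT))
      exact ⟨Q, h1, h2.trans hKP, h3⟩
  · intro P hP
    obtain ⟨R, hRP, hR, hnice, hsp⟩ := sparse_miller hP
    have hRF : R ∈ Fam := by
      intro T hT
      apply Set.Subsingleton.countable
      have hz := hF T hT
      rintro _ ⟨⟨z, rfl⟩, h1⟩ _ ⟨⟨w, rfl⟩, h2⟩
      by_contra hne
      obtain ⟨n, h3, h4⟩ := first_diff hne
      rcases lt_or_gt_of_ne h4 with h5 | h5
      · have := hsp _ h1 _ h2 n h3 h5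
        have := hz.grow w z n
        omega
      · have := hsp _ h2 _ h1 n (fun i hi => (h3 i hi).symm) h5
        have := hz.grow z w n
        omega
    obtain ⟨Q, h1, h2, h3, h4⟩ := avoid Set.Infinite (fun _ h => h.nontrivial) hR.1 hR.2
        hnice A (hs1 R hRF)
    exact ⟨Q, ⟨h1, h2⟩, h3.trans hRP, h4⟩
  · intro T hT
    obtain ⟨z, hz⟩ := (hx T hT).1
    refine ⟨fun hsub => ?_, x T, hz ▸ (hF T hT).body z, T, hT, rfl⟩
    have h1 : #(range (F T)) = 𝔠 := by
      rw [Cardinal.mk_range_eq _ (hF T hT).inj]; simp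
    have h2 : range (F T) ⊆ A ∩ range (F T) := by
      rintro _ ⟨w, rfl⟩
      exact ⟨hsub ((hF T hT).body w), w, rfl⟩
    have := Cardinal.mk_le_mk_of_subset h2
    rw [h1] at this
    exact absurd (hs2 T hT) (not_lt.2 this)

/-- there is an m-measurable, cl-nonmeasurable set, and an
s-measurable, cl-nonmeasurable set. -/
theorem stmt3 :
    (∃ A : Set (ℕ → ℕ),
      TMeasurable {T | IsMillerTree T} A ∧ ¬ TMeasurable {T | IsCompleteLaverTree T} A) ∧
    (∃ A : Set (ℕ → ℕ),
      TMeasurable {T | IsSacksTree T} A ∧ ¬ TMeasurable {T | IsCompleteLaverTree T} A) := by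
  obtain ⟨A, hs, hm, hc⟩ := exists_A
  have hcl : ¬ TMeasurable {T | IsCompleteLaverTree T} A := by
    intro h
    obtain ⟨Q, hQ, -, h1⟩ := h Set.univ ⟨⟨⟨[], trivial⟩, fun _ _ _ => trivial⟩, fun t _ => by
      have : succs Set.univ t = Set.univ := by ext; simp [succs]
      rw [this]; exact infinite_univ⟩
    obtain ⟨h2, h3⟩ := hc Q hQ
    rcases h1 with h1 | h1
    · exact h2 h1
    · exact h3.ne_empty h1
  refine ⟨⟨A, fun P hP => ?_, hcl⟩, ⟨A, fun P hP => ?_, hcl⟩⟩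
  · obtain ⟨Q, h1, h2, h3⟩ := hm P hP
    exact ⟨Q, h1, h2, Or.inr h3⟩
  · obtain ⟨Q, h1, h2, h3⟩ := hs P hP
    exact ⟨Q, h1, h2, Or.inr h3⟩
end

section
/- There is no m₀-Luzin set: for every set L ⊆ ω^ω there exists a set A ∈ m₀ such that the cardinality of A ∩ L equals the cardinality of L. -/
open Cardinal Set

def ini (x : ℕ → ℕ) (n : ℕ) : List ℕ := List.ofFn fun i : Fin n => x i

def Pre (s : List ℕ) (x : ℕ → ℕ) : Prop := ini x s.length = s

lemma ini_length (x : ℕ → ℕ) (n : ℕ) : (ini x n).length = n := by simp [ini]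

lemma ini_take_s12 (x : ℕ → ℕ) (m n : ℕ) (h : m ≤ n) : (ini x n).take m = ini x m := by
  apply List.ext_getElem
  · simp [ini, h]
  · intro i h1 h2
    simp [ini]

lemma pre_ini (x : ℕ → ℕ) (n : ℕ) : Pre (ini x n) x := by
  simp [Pre, ini_length]

lemma ini_mono (x : ℕ → ℕ) {m n : ℕ} (h : m ≤ n) : ini x m <+: ini x n := by
  rw [← ini_take_s12 x m n h]; exact List.take_prefix _ _

lemma pre_prefix {s : List ℕ} {x : ℕ → ℕ} (h : Pre s x) {n : ℕ} (hn : s.length ≤ n) :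
    s <+: ini x n := by
  have := ini_mono x hn
  rwa [show ini x s.length = s from h] at this

lemma pre_mono {s t : List ℕ} {x : ℕ → ℕ} (h : s <+: t) (ht : Pre t x) : Pre s x := by
  have h2 : ini x s.length <+: t := by
    have := ini_mono x h.length_le
    rwa [show ini x t.length = t from ht] at this
  exact (List.prefix_of_prefix_length_le h2 h (by simp [ini_length])).eq_of_length
    (by simp [ini_length])

lemma pre_of_prefix_ini {s : List ℕ} {x : ℕ → ℕ} {n : ℕ} (h : s <+: ini x n) : Pre s x :=
  pre_mono h (pre_ini x n)

lemma pre_le {s t : List ℕ} {x : ℕ → ℕ} (hs : Pre s x) (ht : Pre t x)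
    (h : s.length ≤ t.length) : s <+: t := by
  have := pre_prefix hs h
  rwa [show ini x t.length = t from ht] at this

lemma body_pre {T : Set (List ℕ)} {x : ℕ → ℕ} (hx : x ∈ treeBody T) {s : List ℕ}
    (hs : Pre s x) : s ∈ T := by
  have := hx s.length
  rwa [show (List.ofFn fun i : Fin s.length => x i) = s from hs] at this

lemma body_mono {T U : Set (List ℕ)} (h : T ⊆ U) : treeBody T ⊆ treeBody U :=
  fun _ hx n => h (hx n)

lemma tree_prefix {T : Set (List ℕ)} (hT : IsTree T) {s t : List ℕ} (h : s <+: t) (ht : t ∈ T) :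
    s ∈ T := by
  have := hT.2 t ht s.length
  rwa [← List.prefix_iff_eq_take.1 h] at this

def Scheme (P : Set (List ℕ)) (e : List ℕ → List ℕ) : Prop :=
  (∀ s, e s ∈ P) ∧ ∀ s, ∃ (t : List ℕ) (a : ℕ → ℕ), Function.Injective a ∧ e s <+: t ∧
    ∀ n, t ++ [a n] <+: e (s ++ [n])

def schemeTree (e : List ℕ → List ℕ) : Set (List ℕ) := {t | ∃ s, t <+: e s}

lemma mkScheme (P : Set (List ℕ)) (hP : P.Nonempty) (G : (ℕ → List ℕ) → Prop)
    (H : ∀ t ∈ P, ∃ (t' : List ℕ) (a : ℕ → ℕ) (f : ℕ → List ℕ), Function.Injective a ∧ t <+: t' ∧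
      (∀ n, t' ++ [a n] <+: f n ∧ f n ∈ P) ∧ G f) :
    ∃ e, Scheme P e ∧ ∀ s, G (fun n => e (s ++ [n])) := by
  obtain ⟨r, hr⟩ := hP
  choose! t' a f h1 h2 h3 h4 using H
  let e : List ℕ → List ℕ := fun s => s.foldl f r
  have he : ∀ s n, e (s ++ [n]) = f (e s) n := by intro s n; simp [e]
  have hm : ∀ s, e s ∈ P := by
    intro s
    induction s using List.reverseRecOn with
    | nil => exact hr
    | append_singleton s n ih => rw [he]; exact (h3 _ ih n).2
  refine ⟨e, ⟨hm, fun s => ⟨t' (e s), a (e s), h1 _ (hm s), h2 _ (hm s), fun n => ?_⟩⟩, fun s => ?_⟩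
  · rw [he]; exact (h3 _ (hm s) n).1
  · simp only [he]; exact h4 _ (hm s)

lemma Scheme.step {P : Set (List ℕ)} {e : List ℕ → List ℕ} (h : Scheme P e) (s : List ℕ) (n : ℕ) :
    e s <+: e (s ++ [n]) ∧ (e s).length < (e (s ++ [n])).length := by
  obtain ⟨t, a, -, h1, h2⟩ := h.2 s
  refine ⟨h1.trans ((List.prefix_append _ _).trans (h2 n)), ?_⟩
  have := h1.length_le
  have := (h2 n).length_le
  simp at this
  omega

lemma Scheme.mono {P : Set (List ℕ)} {e : List ℕ → List ℕ} (h : Scheme P e) {s s' : List ℕ}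
    (hs : s <+: s') : e s <+: e s' := by
  obtain ⟨q, rfl⟩ := hs
  induction q using List.reverseRecOn with
  | nil => simp
  | append_singleton q n ih =>
    rw [← List.append_assoc]
    exact ih.trans (h.step _ n).1

lemma Scheme.reflect {P : Set (List ℕ)} {e : List ℕ → List ℕ} (h : Scheme P e) {s s' : List ℕ}
    (hs : e s <+: e s') : s <+: s' := by
  induction s using List.reverseRecOn with
  | nil => simp
  | append_singleton r n ih =>
    obtain ⟨q, rfl⟩ := ih ((h.step r n).1.trans hs)
    cases q with
    | nil =>
      have := hs.length_le
      have := (h.step r n).2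
      simp at *
      omega
    | cons m q =>
      obtain ⟨t, a, ha, h1, h2⟩ := h.2 r
      have h3 : e (r ++ [m]) <+: e (r ++ m :: q) := h.mono ⟨q, by simp⟩
      have h4 := (h2 n).trans hs
      have h5 := (h2 m).trans h3
      have h6 := (List.prefix_of_prefix_length_le h4 h5 (by simp)).eq_of_length (by simp)
      have h7 : n = m := ha (by simpa using h6)
      subst h7
      exact ⟨q, by simp⟩

lemma Scheme.tree {P : Set (List ℕ)} {e : List ℕ → List ℕ} (h : Scheme P e) (hP : IsTree P) :
    schemeTree e ⊆ P ∧ IsMillerTree (schemeTree e) := by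
  refine ⟨?_, ⟨⟨[], [], by simp⟩, ?_⟩, ?_⟩
  · rintro t ⟨s, hs⟩
    exact tree_prefix hP hs (h.1 s)
  · rintro t ⟨s, hs⟩ n
    exact ⟨s, (List.take_prefix _ _).trans hs⟩
  · rintro t ⟨s, hs⟩
    obtain ⟨t', a, ha, h1, h2⟩ := h.2 s
    refine ⟨t', ⟨_, (List.prefix_append _ _).trans (h2 0)⟩, hs.trans h1, ?_⟩
    refine (Set.infinite_range_of_injective ha).mono ?_
    rintro _ ⟨n, rfl⟩
    exact ⟨_, h2 n⟩

lemma Scheme.next {P : Set (List ℕ)} {e : List ℕ → List ℕ} (h : Scheme P e) {x : ℕ → ℕ}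
    (hx : x ∈ treeBody (schemeTree e)) {s : List ℕ} (hs : Pre (e s) x) :
    ∃ n, Pre (e (s ++ [n])) x := by
  obtain ⟨t, a, ha, h1, h2⟩ := h.2 s
  have key : ∀ N, t.length + 1 ≤ N → ∃ n, Pre (t ++ [a n]) x ∧
      ∃ s', ini x N <+: e s' ∧ e (s ++ [n]) <+: e s' := by
    intro N hN
    obtain ⟨s', hs'⟩ := hx N
    change ini x N <+: e s' at hs'
    have hl := h1.length_le
    obtain ⟨q, rfl⟩ := h.reflect ((pre_prefix hs (n := N) (by omega)).trans hs')
    cases q with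
    | nil =>
      have := hs'.length_le
      simp [ini_length] at this
      omega
    | cons m q =>
      have h3 : e (s ++ [m]) <+: e (s ++ m :: q) := h.mono ⟨q, by simp⟩
      refine ⟨m, ?_, _, hs', h3⟩
      exact pre_of_prefix_ini (List.prefix_of_prefix_length_le ((h2 m).trans h3) hs'
        (by simp [ini_length]; omega))
  obtain ⟨n, hn, -⟩ := key _ le_rfl
  obtain ⟨m, hm, s', h3, h4⟩ := key (t.length + 1 + (e (s ++ [n])).length) (by omega)
  have : a n = a m := by
    have := (pre_le hn hm (by simp)).eq_of_length (by simp)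
    simpa using this
  have := ha this
  subst this
  exact ⟨n, pre_of_prefix_ini (List.prefix_of_prefix_length_le h4 h3
    (by simp [ini_length]))⟩

lemma Scheme.branch {P : Set (List ℕ)} {e : List ℕ → List ℕ} (h : Scheme P e) {x : ℕ → ℕ}
    (hx : x ∈ treeBody (schemeTree e)) (k : ℕ) : ∃ s, s.length = k ∧ Pre (e s) x := by
  induction k with
  | zero =>
    obtain ⟨s, hs⟩ := hx (e []).length
    change ini x _ <+: e s at hs
    refine ⟨[], rfl, ?_⟩
    exact (List.prefix_of_prefix_length_le hs (h.mono List.nil_prefix)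
      (by simp [ini_length])).eq_of_length (by simp [ini_length])
  | succ k ih =>
    obtain ⟨s, hs, hs'⟩ := ih
    obtain ⟨n, hn⟩ := h.next hx hs'
    exact ⟨_, by simp [hs], hn⟩

lemma Scheme.unique {P : Set (List ℕ)} {e : List ℕ → List ℕ} (h : Scheme P e) {x : ℕ → ℕ}
    {s s' : List ℕ} (hl : s.length = s'.length) (hs : Pre (e s) x) (hs' : Pre (e s') x) :
    s = s' := by
  rcases le_total (e s).length (e s').length with h1 | h1
  · exact (h.reflect (pre_le hs hs' h1)).eq_of_length hl
  · exact ((h.reflect (pre_le hs' hs h1)).eq_of_length hl.symm).symm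

lemma Scheme.exists_of_miller {P : Set (List ℕ)} (hP : IsMillerTree P) : ∃ e, Scheme P e := by
  obtain ⟨e, he, -⟩ := mkScheme P hP.1.1 (fun _ => True) (by
    intro t ht
    obtain ⟨t', ht', h1, h2⟩ := hP.2 t ht
    refine ⟨t', fun n => h2.natEmbedding _ n, fun n => t' ++ [(h2.natEmbedding _ n : ℕ)], ?_, h1,
      fun n => ⟨List.prefix_rfl, (h2.natEmbedding _ n).2⟩, trivial⟩
    exact Subtype.val_injective.comp (h2.natEmbedding _).injective)
  exact ⟨e, he⟩

def ContOn (P : Set (List ℕ)) (h : (ℕ → ℕ) → ℕ → Prop) : Prop :=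
  ∀ x ∈ treeBody P, ∀ k, ∃ N, ∀ x' ∈ treeBody P, Pre (ini x N) x' → (h x' k ↔ h x k)

open Classical in
noncomputable def tw (y : ℕ → Prop) (s : List ℕ) : List ℕ := s.mapIdx fun i n => 2 * n + if y i then 1 else 0

open Classical in
lemma tw_append (y : ℕ → Prop) (s : List ℕ) (n : ℕ) :
    tw y (s ++ [n]) = tw y s ++ [2 * n + if y s.length then 1 else 0] := by
  simp [tw]

lemma tw_length (y : ℕ → Prop) (s : List ℕ) : (tw y s).length = s.length := by simp [tw]

/-- Each Miller tree has a Miller subtree with a continuous function whose fibres are Miller. -/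
lemma fibres {P : Set (List ℕ)} (hP : IsMillerTree P) :
    ∃ (P' : Set (List ℕ)) (h : (ℕ → ℕ) → ℕ → Prop) (Q : (ℕ → Prop) → Set (List ℕ)),
      P' ⊆ P ∧ IsMillerTree P' ∧ ContOn P' h ∧
      ∀ y, Q y ⊆ P' ∧ IsMillerTree (Q y) ∧ ∀ x ∈ treeBody (Q y), h x = y := by
  classical
  obtain ⟨e, he⟩ := Scheme.exists_of_miller hP
  have hsub : ∀ y, Scheme (schemeTree e) (fun s => e (tw y s)) := by
    intro y
    refine ⟨fun s => ⟨_, List.prefix_rfl⟩, fun s => ?_⟩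
    obtain ⟨t, a, ha, h1, h2⟩ := he.2 (tw y s)
    refine ⟨t, fun n => a (2 * n + if y s.length then 1 else 0), ?_, h1, fun n => ?_⟩
    · intro n m hnm
      have := ha hnm
      omega
    · simp only [tw_append]; exact h2 _
  have hm := he.tree hP.1
  refine ⟨schemeTree e, fun x k => ∃ r n, r.length = k ∧ Pre (e (r ++ [2 * n + 1])) x,
    fun y => schemeTree fun s => e (tw y s), hm.1, hm.2, ?_, ?_⟩
  · intro x hx k
    obtain ⟨s, hs, hsx⟩ := he.branch hx (k + 1)
    refine ⟨(e s).length, fun x' hx' hp => ?_⟩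
    rw [show ini x (e s).length = e s from hsx] at hp
    constructor
    · rintro ⟨r, n, hr, h1⟩
      have := he.unique (by simp [hs, hr]) h1 hp
      exact ⟨r, n, hr, this ▸ hsx⟩
    · rintro ⟨r, n, hr, h1⟩
      have := he.unique (by simp [hs, hr]) h1 hsx
      exact ⟨r, n, hr, this ▸ hp⟩
  · intro y
    have := (hsub y).tree hm.2.1
    refine ⟨this.1, this.2, fun x hx => ?_⟩
    funext k
    obtain ⟨s, hs, hsx⟩ := (hsub y).branch hx k
    obtain ⟨m, hm⟩ := (hsub y).next hx hsx
    simp only [tw_append, hs] at hm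
    apply propext
    constructor
    · rintro ⟨r, n, hr, h1⟩
      have h2 := he.unique (by simp [hr, hs, tw_length]) h1 hm
      have h3 := List.append_inj_right' h2 (by simp)
      by_contra hy
      simp [hy] at h3
      omega
    · intro hy
      exact ⟨tw y s, m, by simp [tw_length, hs], by simpa [hy] using hm⟩

lemma cone {P : Set (List ℕ)} (hP : IsMillerTree P) {s : List ℕ} (hs : s ∈ P) :
    ∃ Q ⊆ P, IsMillerTree Q ∧ ∀ x ∈ treeBody Q, Pre s x := by
  refine ⟨{t ∈ P | t <+: s ∨ s <+: t}, fun t h => h.1, ⟨⟨⟨s, hs, by simp⟩, ?_⟩, ?_⟩, ?_⟩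
  · rintro t ⟨ht, h⟩ n
    refine ⟨hP.1.2 t ht n, ?_⟩
    rcases h with h | h
    · exact Or.inl ((List.take_prefix _ _).trans h)
    · exact List.prefix_or_prefix_of_prefix (List.take_prefix _ _) h
  · rintro t ⟨ht, h⟩
    have : ∃ u ∈ P, t <+: u ∧ s <+: u := by
      rcases h with h | h
      · exact ⟨s, hs, h, by simp⟩
      · exact ⟨t, ht, by simp, h⟩
    obtain ⟨u, hu, h1, h2⟩ := this
    obtain ⟨v, hv, h3, h4⟩ := hP.2 u hu
    refine ⟨v, ⟨hv, Or.inr (h2.trans h3)⟩, h1.trans h3, h4.mono fun n hn => ⟨hn, Or.inr ?_⟩⟩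
    exact (h2.trans h3).trans (List.prefix_append _ _)
  · intro x hx
    rcases (hx s.length).2 with h | h
    · exact h.eq_of_length (by simp)
    · exact (h.eq_of_length (by simp)).symm

lemma fusion {P : Set (List ℕ)} (hP : IsMillerTree P) {h : (ℕ → ℕ) → ℕ → Prop}
    (hc : ContOn P h) :
    ∃ Q ⊆ P, IsMillerTree Q ∧ ((∃ y, ∀ x ∈ treeBody Q, h x = y) ∨ Set.InjOn h (treeBody Q)) := by
  classical
  by_cases hconst : ∃ s ∈ P, ∃ y, ∀ x ∈ treeBody P, Pre s x → h x = y
  · obtain ⟨s, hs, y, hy⟩ := hconst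
    obtain ⟨Q, hQP, hQ, hQs⟩ := cone hP hs
    exact ⟨Q, hQP, hQ, Or.inl ⟨y, fun x hx => hy x (body_mono hQP hx) (hQs x hx)⟩⟩
  push Not at hconst
  have step : ∀ t ∈ P, ∃ (t' : List ℕ) (a : ℕ → ℕ) (f : ℕ → List ℕ), Function.Injective a ∧
      t <+: t' ∧ (∀ n, t' ++ [a n] <+: f n ∧ f n ∈ P) ∧
      ∀ n m, n < m → ∀ x ∈ treeBody P, ∀ x' ∈ treeBody P, Pre (f n) x → Pre (f m) x' →
        h x ≠ h x' := by
    intro t ht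
    obtain ⟨t', ht', h1, hinf⟩ := hP.2 t ht
    set S := succs P t' with hS
    have : ∀ n : S, ∃ x ∈ treeBody P, Pre (t' ++ [(n : ℕ)]) x := by
      rintro ⟨n, hn⟩
      obtain ⟨x, hx, hx', -⟩ := hconst (t' ++ [n]) hn (fun _ => True)
      exact ⟨x, hx, hx'⟩
    choose w hw hw' using this
    have : Infinite S := hinf.to_subtype
    let U : Ultrafilter S := Filter.hyperfilter S
    let z : ℕ → Prop := fun k => ∀ᶠ n in (U : Filter S), h (w n) k
    have hz : ∀ k, ∀ᶠ n in (U : Filter S), (h (w n) k ↔ z k) := by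
      intro k
      by_cases hk : z k
      · have hk' : ∀ᶠ n in (U : Filter S), h (w n) k := hk
        filter_upwards [hk'] with n hn
        simp [hn, hk]
      · have hk' : ∀ᶠ n in (U : Filter S), ¬ h (w n) k := Ultrafilter.eventually_not.2 hk
        filter_upwards [hk'] with n hn
        simp [hn, hk]
    obtain ⟨g, hg1, hg2⟩ := exists_seq_of_forall_finset_exists
      (α := S × List ℕ × ℕ)
      (fun p => t' ++ [(p.1 : ℕ)] <+: p.2.1 ∧ p.2.1 ∈ P ∧
        ∀ x ∈ treeBody P, Pre p.2.1 x → ¬ (h x p.2.2 ↔ z p.2.2))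
      (fun p q => p.1 ≠ q.1 ∧ ∀ x ∈ treeBody P, Pre q.2.1 x → (h x p.2.2 ↔ z p.2.2)) (by
        intro F _
        have e1 : ∀ᶠ n in (U : Filter S), ∀ p ∈ F, (h (w n) p.2.2 ↔ z p.2.2) :=
          (Filter.eventually_all_finset F).2 fun p _ => hz _
        have e2 : ∀ᶠ n in (U : Filter S), ∀ p ∈ F, p.1 ≠ n := by
          refine (Filter.eventually_all_finset F).2 fun p _ => ?_
          have : ∀ᶠ n in (Filter.cofinite : Filter S), p.1 ≠ n := by
            refine (Set.finite_singleton p.1).subset ?_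
            intro n hn
            simpa [eq_comm] using hn
          exact Filter.hyperfilter_le_cofinite this
        obtain ⟨n, hn1, hn2⟩ := (e1.and e2).exists
        choose N hN using hc (w n) (hw n)
        let K := F.sup (fun p => N p.2.2) + (t'.length + 1)
        have hK : t' ++ [(n : ℕ)] <+: ini (w n) K := pre_prefix (hw' n) (by simp [K])
        obtain ⟨v, hv, hv1, hv2⟩ := hconst (ini (w n) K) (hw n K) z
        have : ∃ k, ¬ (h v k ↔ z k) := by
          by_contra hcon
          push Not at hcon
          exact hv2 (funext fun k => propext (hcon k))
        obtain ⟨k, hk⟩ := this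
        obtain ⟨M, hM⟩ := hc v hv k
        have hKM : ini (w n) K <+: ini v (K + M) := pre_prefix hv1 (by simp [ini_length])
        refine ⟨(n, ini v (K + M), k), ⟨hK.trans hKM, hv _, ?_⟩, ?_⟩
        · intro x hx hxp
          rw [hM x hx (pre_mono (ini_mono v (by omega)) hxp)]
          exact hk
        · intro p hp
          refine ⟨hn2 p hp, fun x hx hxp => ?_⟩
          rw [hN p.2.2 x hx (pre_mono (ini_mono _ ?_) (pre_mono hKM hxp))]
          · exact hn1 p hp
          · have : N p.2.2 ≤ F.sup (fun p => N p.2.2) :=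
              Finset.le_sup (f := fun p : S × List ℕ × ℕ => N p.2.2) hp
            omega)
    refine ⟨t', fun i => ((g i).1 : ℕ), fun i => (g i).2.1, ?_, h1,
      fun i => ⟨(hg1 i).1, (hg1 i).2.1⟩, ?_⟩
    · intro i j hij
      have hij' : (g i).1 = (g j).1 := Subtype.ext hij
      rcases lt_trichotomy i j with hlt | heq | hlt
      · exact absurd hij' (hg2 i j hlt).1
      · exact heq
      · exact absurd hij'.symm (hg2 j i hlt).1
    · intro i j hij x hx x' hx' hp hp' heq
      apply (hg1 i).2.2 x hx hp
      rw [heq]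
      exact (hg2 i j hij).2 x' hx' hp'
  obtain ⟨e, he, hG⟩ := mkScheme P hP.1.1 _ step
  have hT := he.tree hP.1
  refine ⟨_, hT.1, hT.2, Or.inr ?_⟩
  intro x hx x' hx' heq
  by_contra hne
  have hall : ∀ k, ∃ s, s.length = k ∧ Pre (e s) x ∧ Pre (e s) x' := by
    intro k
    induction k with
    | zero =>
      obtain ⟨s, hs, h1⟩ := he.branch hx 0
      obtain ⟨s', hs', h1'⟩ := he.branch hx' 0
      obtain rfl := List.length_eq_zero_iff.1 hs
      obtain rfl := List.length_eq_zero_iff.1 hs'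
      exact ⟨_, rfl, h1, h1'⟩
    | succ k ih =>
      obtain ⟨s, hs, h1, h2⟩ := ih
      obtain ⟨n, hn⟩ := he.next hx h1
      obtain ⟨m, hm⟩ := he.next hx' h2
      have b := body_mono hT.1 hx
      have b' := body_mono hT.1 hx'
      rcases lt_trichotomy n m with hlt | rfl | hlt
      · exact absurd heq (hG s n m hlt x b x' b' hn hm)
      · exact ⟨_, by simp [hs], hn, hm⟩
      · exact absurd heq.symm (hG s m n hlt x' b' x b hm hn)
  have hlen : ∀ s, s.length ≤ (e s).length := by
    intro s
    induction s using List.reverseRecOn with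
    | nil => simp
    | append_singleton s n ih =>
      have := (he.step s n).2
      simp
      omega
  apply hne
  funext i
  obtain ⟨s, hs, h1, h2⟩ := hall (i + 1)
  have hi := hlen s
  have h3 : ini x (e s).length = ini x' (e s).length := by rw [h1, h2]
  have := List.ofFn_injective h3
  exact congrFun this ⟨i, by omega⟩

lemma mk_natProp : Cardinal.mk (ℕ → Prop) = 𝔠 := by
  simp [← Cardinal.two_power_aleph0]

lemma avoid_s12 {P : Set (List ℕ)} (hP : IsMillerTree P) (B : Set (ℕ → ℕ)) (hB : Cardinal.mk B < 𝔠) :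
    ∃ Q ⊆ P, IsMillerTree Q ∧ treeBody Q ∩ B = ∅ := by
  obtain ⟨P', h, Q, hP', -, -, hQ⟩ := fibres hP
  by_contra hcon
  push Not at hcon
  have : ∀ y, ∃ x : B, (x : ℕ → ℕ) ∈ treeBody (Q y) := by
    intro y
    obtain ⟨x, hx1, hx2⟩ := hcon (Q y) ((hQ y).1.trans hP') (hQ y).2.1
    exact ⟨⟨x, hx2⟩, hx1⟩
  choose f hf using this
  have hinj : Function.Injective f := by
    intro y y' hy
    rw [← (hQ y).2.2 _ (hf y), ← (hQ y').2.2 _ (hf y'), hy]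
  have := Cardinal.mk_le_of_injective hinj
  rw [mk_natProp] at this
  exact absurd hB (not_lt.2 this)

/-- there is no m₀-Luzin set. -/
theorem stmt12 :
    ∀ L : Set (ℕ → ℕ), ∃ A ∈ treeIdeal {T | IsMillerTree T},
      Cardinal.mk ↑(A ∩ L) = Cardinal.mk ↑L := by
  classical
  intro L
  by_cases hL : L ∈ treeIdeal {T | IsMillerTree T}
  · exact ⟨L, hL, by rw [Set.inter_self]⟩
  have hL' : ∃ P, IsMillerTree P ∧ ∀ Q ⊆ P, IsMillerTree Q → (treeBody Q ∩ L).Nonempty := by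
    by_contra hcon
    push Not at hcon
    apply hL
    intro P hP
    obtain ⟨Q, h1, h2, h3⟩ := hcon P hP
    exact ⟨Q, h2, h1, h3⟩
  obtain ⟨P, hP, hPL⟩ := hL'
  have big : ∀ Q ⊆ P, IsMillerTree Q → 𝔠 ≤ Cardinal.mk ↑(treeBody Q ∩ L) := by
    intro Q hQP hQ
    by_contra hlt
    obtain ⟨R, hRQ, hR, he⟩ := avoid_s12 hQ _ (not_le.1 hlt)
    obtain ⟨x, hx1, hx2⟩ := hPL R (hRQ.trans hQP) hR
    have : x ∈ treeBody R ∩ (treeBody Q ∩ L) := ⟨hx1, body_mono hRQ hx1, hx2⟩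
    rw [he] at this
    exact this
  obtain ⟨P', h, Q, hP'P, hP', hc, hQ⟩ := fibres hP
  have dich : ∀ T, IsMillerTree T → ∃ R ⊆ T, IsMillerTree R ∧ ∃ y0, ∀ y, y ≠ y0 →
      (treeBody R ∩ treeBody (Q y)).Subsingleton := by
    intro T hT
    by_cases hTP : T ⊆ P'
    · obtain ⟨R, hRT, hR, hd⟩ := fusion hT (h := h) (by
        intro x hx k
        obtain ⟨N, hN⟩ := hc x (body_mono hTP hx) k
        exact ⟨N, fun x' hx' => hN x' (body_mono hTP hx')⟩)
      refine ⟨R, hRT, hR, ?_⟩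
      rcases hd with ⟨y0, hy0⟩ | hinj
      · refine ⟨y0, fun y hy x hx => ?_⟩
        exact absurd (((hQ y).2.2 x hx.2).symm.trans (hy0 x hx.1)) hy
      · refine ⟨fun _ => True, fun y _ x hx x' hx' => hinj hx.1 hx'.1 ?_⟩
        rw [(hQ y).2.2 x hx.2, (hQ y).2.2 x' hx'.2]
    · obtain ⟨s, hs, hsP⟩ := Set.not_subset.1 hTP
      obtain ⟨R, hRT, hR, hRs⟩ := cone hT hs
      refine ⟨R, hRT, hR, fun _ => True, fun y _ x hx => ?_⟩
      exact absurd (body_pre (body_mono (hQ y).1 hx.2) (hRs x hx.1)) hsP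
  choose! R hRT hR y0 hy0 using dich
  let I := (𝔠).ord.ToType
  have hI : Cardinal.mk I = 𝔠 := by simp [I]
  have hIio : ∀ i : I, Cardinal.mk (Set.Iio i) < 𝔠 := fun i => Cardinal.mk_Iio_toType_ord_lt i
  obtain ⟨ey⟩ : Nonempty (I ≃ (ℕ → Prop)) := Cardinal.eq.1 (by rw [hI, mk_natProp])
  obtain ⟨eT⟩ : Nonempty (I ≃ Set (List ℕ)) := Cardinal.eq.1 (by
    rw [hI, Cardinal.mk_set, Cardinal.mk_eq_aleph0, Cardinal.two_power_aleph0])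
  have pick : ∀ i : I, ∃ x, x ∈ treeBody (Q (ey i)) ∩ L ∧
      ∀ j < i, IsMillerTree (eT j) → ey i ≠ y0 (eT j) → x ∉ treeBody (R (eT j)) := by
    intro i
    by_contra hcon
    push Not at hcon
    have : Nonempty I := ⟨i⟩
    choose! j hj1 hj2 hj3 hj4 using hcon
    have hinj : Set.InjOn j (treeBody (Q (ey i)) ∩ L) := by
      intro x hx x' hx' hxx
      exact hy0 _ (hj2 x hx) _ (hj3 x hx) ⟨hj4 x hx, hx.1⟩ ⟨hxx ▸ hj4 x' hx', hx'.1⟩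
    have hmaps : Set.MapsTo j (treeBody (Q (ey i)) ∩ L) (Set.Iio i) := fun x hx => hj1 x hx
    have h1 : Cardinal.mk ↑(treeBody (Q (ey i)) ∩ L) ≤ Cardinal.mk (Set.Iio i) :=
      Cardinal.mk_le_of_injective (hmaps.restrict_inj.2 hinj)
    exact absurd (((big _ ((hQ _).1.trans hP'P) (hQ _).2.1).trans h1).trans_lt (hIio i))
      (lt_irrefl _)
  choose x hx hxR using pick
  have hxinj : Function.Injective x := by
    intro i j hij
    apply ey.injective
    rw [← (hQ (ey i)).2.2 _ (hx i).1, ← (hQ (ey j)).2.2 _ (hx j).1, hij]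
  refine ⟨Set.range x, ?_, ?_⟩
  · intro T hT
    have hT : IsMillerTree T := hT
    obtain ⟨j, rfl⟩ := eT.surjective T
    have hsmall : Cardinal.mk ↑(Set.range x ∩ treeBody (R (eT j))) < 𝔠 := by
      have hsub : Set.range x ∩ treeBody (R (eT j)) ⊆
          x '' (Set.Iio j ∪ ({j} ∪ {ey.symm (y0 (eT j))})) := by
        rintro _ ⟨⟨i, rfl⟩, hi⟩
        refine ⟨i, ?_, rfl⟩
        by_contra hni
        simp only [Set.mem_union, Set.mem_Iio, Set.mem_singleton_iff, not_or, not_lt] at hni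
        refine hxR i j (lt_of_le_of_ne hni.1 (Ne.symm hni.2.1)) hT ?_ hi
        intro he
        exact hni.2.2 (by rw [← he]; simp)
      refine (Cardinal.mk_le_mk_of_subset hsub).trans_lt (Cardinal.mk_image_le.trans_lt ?_)
      refine (Cardinal.mk_union_le _ _).trans_lt
        (Cardinal.add_lt_of_lt Cardinal.aleph0_le_continuum (hIio j) ?_)
      exact (Set.Finite.lt_aleph0 (Set.toFinite _)).trans Cardinal.aleph0_lt_continuum
    obtain ⟨W, hW, hWM, hWe⟩ := avoid_s12 (hR _ hT) _ hsmall
    refine ⟨W, hWM, hW.trans (hRT _ hT), ?_⟩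
    rw [Set.eq_empty_iff_forall_notMem] at hWe ⊢
    rintro v ⟨hv1, hv2⟩
    exact hWe v ⟨hv1, hv2, body_mono hW hv1⟩
  · have hsub : Set.range x ⊆ L := by
      rintro _ ⟨i, rfl⟩
      exact (hx i).2
    rw [Set.inter_eq_left.2 hsub]
    apply le_antisymm (Cardinal.mk_le_mk_of_subset hsub)
    rw [Cardinal.mk_range_eq x hxinj, hI]
    refine (Cardinal.mk_set_le L).trans ?_
    simp
end

section
/- For every set X ⊆ ω^ω of cardinality 𝔠 (the cardinality of the continuum) there exists a set A ⊆ X such that A belongs to the tree ideal l₀ and A has cardinality 𝔠. -/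
open Cardinal Set

/-- initial segment -/
def rst (x : ℕ → ℕ) (n : ℕ) : List ℕ := List.ofFn fun i : Fin n => x i

theorem rst_succ (x : ℕ → ℕ) (n : ℕ) : rst x (n+1) = rst x n ++ [x n] := by
  unfold rst; rw [List.ofFn_succ_last]; simp

theorem rst_len (x : ℕ → ℕ) (n : ℕ) : (rst x n).length = n := by simp [rst]

theorem rst_get (x : ℕ → ℕ) (n i : ℕ) (h : i < (rst x n).length) : (rst x n)[i] = x i := by
  simp [rst]

theorem rst_take (x : ℕ → ℕ) (n i : ℕ) (h : i ≤ n) : (rst x n).take i = rst x i := by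
  apply List.ext_getElem
  · simp [rst_len, h]
  · intro j h1 h2
    simp [rst]

theorem rst_prefix (x : ℕ → ℕ) {m n : ℕ} (h : m ≤ n) : rst x m <+: rst x n := by
  rw [← rst_take x n m h]; exact List.take_prefix _ _

/-- the tree with stem s and successor sets S -/
inductive LvT (s : List ℕ) (S : List ℕ → Set ℕ) : List ℕ → Prop
  | base (t : List ℕ) : t <+: s → LvT s S t
  | step (t : List ℕ) (k : ℕ) : LvT s S t → s <+: t → k ∈ S t → LvT s S (t ++ [k])

theorem LvT_sub {P : Set (List ℕ)} (hP : IsTree P) {s : List ℕ} (hs : s ∈ P)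
    {S : List ℕ → Set ℕ} (hS : ∀ t ∈ P, s <+: t → S t ⊆ succs P t) :
    {t | LvT s S t} ⊆ P := by
  intro t ht
  induction ht with
  | base t h => rw [List.prefix_iff_eq_take.1 h]; exact hP.2 s hs _
  | step t k _ h hk ih => exact hS t ih h hk

theorem LvT_laver {P : Set (List ℕ)} (hP : IsTree P) {s : List ℕ} (hs : s ∈ P)
    {S : List ℕ → Set ℕ} (hS : ∀ t ∈ P, s <+: t → S t ⊆ succs P t)
    (hS' : ∀ t ∈ P, s <+: t → (S t).Infinite) :
    IsLaverTree {t | LvT s S t} := by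
  refine ⟨⟨⟨s, LvT.base s (List.prefix_refl s)⟩, ?_⟩, s, LvT.base s (List.prefix_refl s), ?_, ?_⟩
  · intro t ht
    induction ht with
    | base t h => intro n; exact LvT.base _ ((List.take_prefix _ _).trans h)
    | step t k h1 h hk ih =>
      intro n
      by_cases hn : n ≤ t.length
      · rw [List.take_append_of_le_length hn]; exact ih n
      · rw [List.take_of_length_le (by simp; omega)]; exact LvT.step t k h1 h hk
  · intro t ht
    induction ht with
    | base t h => right; exact h
    | step t k h1 h hk ih => left; exact h.trans (List.prefix_append _ _)
  · intro t ht hst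
    exact (hS' t (LvT_sub hP hs hS ht) hst).mono fun k hk => LvT.step t k ht hst hk

theorem LvT_inv {s : List ℕ} {S : List ℕ → Set ℕ} {u : List ℕ} (h : LvT s S u) :
    ∀ t k, u = t ++ [k] → s <+: t → k ∈ S t := by
  intro t k hu hst
  cases h with
  | base _ h =>
    have := h.length_le
    have := hst.length_le
    subst hu
    simp at *; omega
  | step t' k' h1 h hk =>
    have := List.append_inj' hu rfl
    obtain ⟨rfl, h2⟩ := this
    simp at h2; subst h2; exact hk

theorem LvT_stem {s : List ℕ} {S : List ℕ → Set ℕ} {t : List ℕ} (h : LvT s S t) :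
    s <+: t ∨ t <+: s := by
  induction h with
  | base t h => right; exact h
  | step t k h1 h hk ih => left; exact h.trans (List.prefix_append _ _)

theorem body_stem {s : List ℕ} {S : List ℕ → Set ℕ} {x : ℕ → ℕ} (h : x ∈ treeBody {t | LvT s S t})
    {n : ℕ} (hn : s.length ≤ n) : s <+: rst x n := by
  rcases LvT_stem (h n) with h1 | h1
  · exact h1
  · have : rst x n = s := h1.eq_of_length_le (by simpa using hn)
    rw [this]

theorem body_mem {s : List ℕ} {S : List ℕ → Set ℕ} {x : ℕ → ℕ} (h : x ∈ treeBody {t | LvT s S t})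
    {n : ℕ} (hn : s.length ≤ n) : x n ∈ S (rst x n) :=
  LvT_inv (h (n+1)) _ _ (rst_succ x n) (body_stem h hn)

/-- the coding map -/
def FB (B : List ℕ → Set ℕ) (x : ℕ → ℕ) (n : ℕ) : Prop := x n ∈ B (rst x n)

theorem inf_split (S : Set ℕ) (h : S.Infinite) :
    ∃ B : Set ℕ, (S ∩ B).Infinite ∧ (S \ B).Infinite := by
  have hi : Function.Injective (Nat.nth (· ∈ S)) := Nat.nth_injective h
  have hm : ∀ n, Nat.nth (· ∈ S) n ∈ S := fun n => Nat.nth_mem_of_infinite h n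
  refine ⟨range fun n => Nat.nth (· ∈ S) (2*n), ?_, ?_⟩
  · refine Set.infinite_of_injective_forall_mem (f := fun n => Nat.nth (· ∈ S) (2*n)) ?_ ?_
    · intro a b hab; have := hi hab; omega
    · intro n; exact ⟨hm _, n, rfl⟩
  · refine Set.infinite_of_injective_forall_mem (f := fun n => Nat.nth (· ∈ S) (2*n+1)) ?_ ?_
    · intro a b hab; have := hi hab; omega
    · intro n; refine ⟨hm _, ?_⟩
      rintro ⟨m, hm⟩
      have := hi hm; omega

theorem split_lem (P : Set (List ℕ)) (hP : IsLaverTree P) :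
    ∃ (B : List ℕ → Set ℕ) (R : (ℕ → Prop) → Set (List ℕ)) (code : (ℕ → Prop) → (ℕ → Prop)),
      Function.Injective code ∧ ∀ ρ, IsLaverTree (R ρ) ∧ R ρ ⊆ P ∧
        ∀ x ∈ treeBody (R ρ), FB B x = code ρ := by
  obtain ⟨hT, s, hs, -, hinf⟩ := hP
  have : ∀ t, ∃ B : Set ℕ, (succs P t).Infinite →
      (succs P t ∩ B).Infinite ∧ (succs P t \ B).Infinite := by
    intro t
    by_cases h : (succs P t).Infinite
    · obtain ⟨B, hB⟩ := inf_split _ h; exact ⟨B, fun _ => hB⟩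
    · exact ⟨∅, fun h' => absurd h' h⟩
  choose B hB using this
  let S : (ℕ → Prop) → List ℕ → Set ℕ := fun ρ t =>
    {k | k ∈ succs P t ∧ (k ∈ B t ↔ ρ (t.length - s.length))}
  have h1 : ∀ ρ, ∀ t ∈ P, s <+: t → S ρ t ⊆ succs P t := fun ρ t _ _ k hk => hk.1
  have h2 : ∀ ρ, ∀ t ∈ P, s <+: t → (S ρ t).Infinite := by
    intro ρ t ht hst
    obtain ⟨ha, hb⟩ := hB t (hinf t ht hst)
    by_cases hr : ρ (t.length - s.length)
    · exact ha.mono fun k hk => ⟨hk.1, by simp [hr, hk.2]⟩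
    · exact hb.mono fun k hk => ⟨hk.1, by simp [hr, hk.2]⟩
  refine ⟨fun t => {k | s.length ≤ t.length ∧ k ∈ B t}, fun ρ => {t | LvT s (S ρ) t},
    fun ρ n => s.length ≤ n ∧ ρ (n - s.length), ?_, ?_⟩
  · intro ρ ρ' h
    ext n
    have := congrFun h (n + s.length)
    simpa using this
  · intro ρ
    refine ⟨LvT_laver hT hs (h1 ρ) (h2 ρ), LvT_sub hT hs (h1 ρ), ?_⟩
    intro x hx
    ext n
    simp only [FB, mem_ofPred_eq, rst_len]
    refine and_congr_right fun hn => ?_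
    have := (body_mem hx hn).2
    rwa [rst_len] at this

theorem card_pred : Cardinal.mk (ℕ → Prop) = Cardinal.continuum := by
  simp

theorem shrink_lem (P : Set (List ℕ)) (hP : IsLaverTree P) (Y : Set (ℕ → ℕ))
    (hY : Cardinal.mk Y < Cardinal.continuum) :
    ∃ Q, IsLaverTree Q ∧ Q ⊆ P ∧ treeBody Q ∩ Y = ∅ := by
  obtain ⟨B, R, code, hc, hR⟩ := split_lem P hP
  by_contra hcon
  push Not at hcon
  have : ∀ ρ, ∃ y : Y, (y : ℕ → ℕ) ∈ treeBody (R ρ) := by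
    intro ρ
    obtain ⟨y, hy1, hy2⟩ := hcon (R ρ) (hR ρ).1 (hR ρ).2.1
    exact ⟨⟨y, hy2⟩, hy1⟩
  choose y hy using this
  have hinj : Function.Injective y := by
    intro a b hab
    apply hc
    rw [← (hR a).2.2 _ (hy a), ← (hR b).2.2 _ (hy b), hab]
  have := Cardinal.mk_le_of_injective hinj
  rw [card_pred] at this
  exact absurd hY (not_lt.2 this)

/-- iterated ultrafilter limits of the coding map -/
def gl (B : List ℕ → Set ℕ) (U : List ℕ → Ultrafilter ℕ) (t : List ℕ) (n : ℕ) : Prop :=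
  if h : n < t.length then t[n] ∈ B (t.take n)
  else ∀ᶠ k in (U t : Filter ℕ), gl B U (t ++ [k]) n
termination_by n + 1 - t.length
decreasing_by simp; omega

theorem gl_rst (B : List ℕ → Set ℕ) (U : List ℕ → Ultrafilter ℕ) (x : ℕ → ℕ) (m n : ℕ)
    (h : n < m) : gl B U (rst x m) n ↔ FB B x n := by
  rw [gl, dif_pos (by rw [rst_len]; exact h), rst_get, rst_take _ _ _ h.le]; rfl

theorem gl_ev (B : List ℕ → Set ℕ) (U : List ℕ → Ultrafilter ℕ) (t : List ℕ) (n : ℕ) :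
    ∀ᶠ k in (U t : Filter ℕ), (gl B U (t ++ [k]) n ↔ gl B U t n) := by
  by_cases h : n < t.length
  · refine Filter.Eventually.of_forall fun k => ?_
    rw [gl, dif_pos (by simp; omega), gl, dif_pos h, List.getElem_append_left h,
      List.take_append_of_le_length h.le]
  · have e : gl B U t n ↔ ∀ᶠ k in (U t : Filter ℕ), gl B U (t ++ [k]) n := by
      conv_lhs => rw [gl, dif_neg h]
    by_cases h' : gl B U t n
    · filter_upwards [e.1 h'] with k hk
      simp [hk, h']
    · have : ∀ᶠ k in (U t : Filter ℕ), ¬ gl B U (t ++ [k]) n :=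
        Ultrafilter.eventually_not.2 (fun hh => h' (e.2 hh))
      filter_upwards [this] with k hk
      simp [hk, h']

theorem main_lem (P : Set (List ℕ)) (hP : IsLaverTree P) (B : List ℕ → Set ℕ) :
    ∃ Q, IsLaverTree Q ∧ Q ⊆ P ∧ ∃ E : Set (ℕ → Prop), E.Countable ∧
      ∀ x ∈ treeBody Q, ∀ y ∈ treeBody Q, FB B x = FB B y → FB B x ∉ E → x = y := by
  classical
  obtain ⟨hT, s, hs, -, hinf⟩ := hP
  have : ∀ t, ∃ U : Ultrafilter ℕ, (U : Filter ℕ) ≤ Filter.cofinite ∧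
      ((succs P t).Infinite → ∀ᶠ k in (U : Filter ℕ), k ∈ succs P t) := by
    intro t
    by_cases h : (succs P t).Infinite
    · have : (Filter.cofinite ⊓ Filter.principal (succs P t)).NeBot :=
        h.cofinite_inf_principal_neBot
      have hle := Ultrafilter.of_le (Filter.cofinite ⊓ Filter.principal (succs P t))
      exact ⟨Ultrafilter.of _, hle.trans inf_le_left, fun _ =>
        (hle.trans inf_le_right) (Filter.mem_principal_self _)⟩
    · exact ⟨Filter.hyperfilter ℕ, Filter.hyperfilter_le_cofinite, fun h' => absurd h' h⟩
  choose U hU hU2 using this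
  have Uinf : ∀ t (p : ℕ → Prop), (∀ᶠ k in (U t : Filter ℕ), p k) → {k | p k}.Infinite := by
    intro t p hp hfin
    have h1 : ∀ᶠ k in (U t : Filter ℕ), k ∉ {k | p k} := hU t hfin.compl_mem_cofinite
    obtain ⟨k, hk, hk'⟩ := (hp.and h1).exists
    exact hk' hk
  set g := gl B U with hg
  let ina : List ℕ → Prop := fun t => ∀ᶠ k in (U t : Filter ℕ), g (t ++ [k]) = g t
  let δ : List ℕ → ℕ → ℕ := fun t k => sInf {n | ¬ (g (t ++ [k]) n ↔ g t n)}
  have δlt : ∀ t k i, i < δ t k → (g (t ++ [k]) i ↔ g t i) := by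
    intro t k i hi
    have := Nat.notMem_of_lt_sInf hi
    simpa using this
  have δeq : ∀ t k, g (t ++ [k]) ≠ g t → ¬ (g (t ++ [k]) (δ t k) ↔ g t (δ t k)) := by
    intro t k h
    have : {n | ¬ (g (t ++ [k]) n ↔ g t n)}.Nonempty := by
      by_contra hne
      rw [Set.not_nonempty_iff_eq_empty] at hne
      apply h
      ext n
      by_contra hn
      have : n ∈ {n | ¬ (g (t ++ [k]) n ↔ g t n)} := hn
      rw [hne] at this; exact this
    exact Nat.sInf_mem this
  let M : List ℕ → ℕ := fun t => ∑ i ∈ Finset.range t.length, δ (t.take i) (t.getD i 0)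
  have hK : ∀ t N, ∃ k, t ∈ P → s <+: t → ¬ ina t →
      k ∈ succs P t ∧ g (t ++ [k]) ≠ g t ∧ N < δ t k := by
    intro t N
    by_cases h : t ∈ P ∧ s <+: t ∧ ¬ ina t
    · obtain ⟨h1, h2, h3⟩ := h
      have e1 := hU2 t (hinf t h1 h2)
      have e2 : ∀ᶠ k in (U t : Filter ℕ), ¬ (g (t ++ [k]) = g t) := Ultrafilter.eventually_not.2 h3
      have e3 : ∀ᶠ k in (U t : Filter ℕ), ∀ n ∈ Finset.range (N+1), (g (t ++ [k]) n ↔ g t n) :=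
        (Filter.eventually_all_finset _).2 fun n _ => gl_ev B U t n
      obtain ⟨k, hk1, hk2, hk3⟩ := (e1.and (e2.and e3)).exists
      refine ⟨k, fun _ _ _ => ⟨hk1, hk2, ?_⟩⟩
      by_contra hlt
      exact δeq t k hk2 (hk3 _ (Finset.mem_range.2 (by omega)))
    · exact ⟨0, fun a b c => absurd ⟨a, b, c⟩ h⟩
  choose K hK using hK
  let τ : ℕ → List ℕ := fun n => ((Denumerable.eqv (List ℕ × ℕ)).symm n).1
  let N : ℕ → ℕ := fun n => Nat.rec 0 (fun n N => max N (δ (τ n) (K (τ n) (N + M (τ n))))) n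
  let κ : ℕ → ℕ := fun n => K (τ n) (N n + M (τ n))
  have hN : ∀ n, N (n+1) = max (N n) (δ (τ n) (κ n)) := fun n => rfl
  have hNm : Monotone N := monotone_nat_of_le_succ fun n => by rw [hN]; exact le_max_left _ _
  let gd : List ℕ → Prop := fun t => t ∈ P ∧ s <+: t ∧ ¬ ina t
  have hκ : ∀ n, gd (τ n) → κ n ∈ succs P (τ n) ∧ g (τ n ++ [κ n]) ≠ g (τ n) ∧
      N n + M (τ n) < δ (τ n) (κ n) := fun n h => hK _ _ h.1 h.2.1 h.2.2
  have hlt : ∀ m n, m < n → gd (τ n) → δ (τ m) (κ m) < δ (τ n) (κ n) := by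
    intro m n hmn h
    have h1 := (hκ n h).2.2
    have h2 : N (m+1) ≤ N n := hNm hmn
    have h3 : δ (τ m) (κ m) ≤ N (m+1) := by rw [hN]; exact le_max_right _ _
    omega
  have hinj : ∀ m n, gd (τ m) → gd (τ n) → δ (τ m) (κ m) = δ (τ n) (κ n) → m = n := by
    intro m n h1 h2 h
    rcases lt_trichotomy m n with h3 | h3 | h3
    · have := hlt m n h3 h2; omega
    · exact h3
    · have := hlt n m h3 h1; omega
  let S : List ℕ → Set ℕ := fun t =>
    if ina t then {k | k ∈ succs P t ∧ g (t ++ [k]) = g t} else {k | ∃ n, τ n = t ∧ k = κ n}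
  have hS : ∀ t ∈ P, s <+: t → S t ⊆ succs P t := by
    intro t ht hst k hk
    by_cases h : ina t
    · simp only [S, if_pos h] at hk; exact hk.1
    · simp only [S, if_neg h] at hk
      obtain ⟨n, rfl, rfl⟩ := hk
      exact (hκ n ⟨ht, hst, h⟩).1
  have hS' : ∀ t ∈ P, s <+: t → (S t).Infinite := by
    intro t ht hst
    by_cases h : ina t
    · simp only [S, if_pos h]
      exact Uinf t _ ((hU2 t (hinf t ht hst)).and h)
    · simp only [S, if_neg h]
      have hτ : ∀ j, τ (Denumerable.eqv (List ℕ × ℕ) (t, j)) = t := by intro j; simp [τ]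
      refine Set.infinite_of_injective_forall_mem
        (f := fun j => κ (Denumerable.eqv (List ℕ × ℕ) (t, j))) ?_ ?_
      · intro a b hab
        have hgd : gd t := ⟨ht, hst, h⟩
        have := hinj _ _ (by rw [hτ a]; exact hgd) (by rw [hτ b]; exact hgd)
          (by rw [hτ a, hτ b]; exact congrArg _ hab)
        simpa using this
      · intro j; exact ⟨_, hτ j, rfl⟩
  have hsub := LvT_sub hT hs hS
  refine ⟨{t | LvT s S t}, LvT_laver hT hs hS hS', hsub, range g, countable_range g, ?_⟩
  -- analysis of an exit
  have exitL : ∀ x ∈ treeBody {t | LvT s S t}, FB B x ∉ range g → ∀ m, s.length ≤ m →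
      ∃ m1 ≥ m, ∃ n, gd (τ n) ∧ τ n = rst x m1 ∧ κ n = x m1 ∧
        (∀ i < δ (τ n) (κ n), (FB B x i ↔ g (rst x m) i)) ∧
        ¬ (FB B x (δ (τ n) (κ n)) ↔ g (rst x m) (δ (τ n) (κ n))) := by
    intro x hx hr m hm
    have h1 : ∃ j, g (rst x (m + (j + 1))) ≠ g (rst x m) := by
      by_contra hcon
      push Not at hcon
      apply hr
      refine ⟨rst x m, ?_⟩
      ext n
      rw [← hcon n]
      exact gl_rst B U x _ n (by omega)
    have hj1 := Nat.find_spec h1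
    set j := Nat.find h1 with hj
    have hj2 : g (rst x (m + j)) = g (rst x m) := by
      rcases Nat.eq_zero_or_pos j with h0 | h0
      · rw [h0]; rfl
      · obtain ⟨i, hi⟩ : ∃ i, j = i + 1 := ⟨j - 1, by omega⟩
        have := Nat.find_min h1 (m := i) (by omega)
        rw [hi]; simpa using this
    have hmem : ∀ n, rst x n ∈ P := fun n => hsub (hx n)
    have hk := body_mem hx (n := m + j) (by omega)
    have hst := body_stem hx (n := m + j) (by omega)
    rw [← add_assoc, rst_succ, ← hj2] at hj1
    have hina : ¬ ina (rst x (m + j)) := by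
      intro h
      simp only [S, if_pos h] at hk
      exact hj1 hk.2
    simp only [S, if_neg hina] at hk
    obtain ⟨n, hn1, hn2⟩ := hk
    have hgd : gd (τ n) := by rw [hn1]; exact ⟨hmem _, hst, hina⟩
    have hstab : ∀ l, ∀ i ≤ δ (τ n) (κ n),
        (g (rst x (m + j + 1 + l)) i ↔ g (rst x (m + j + 1)) i) := by
      intro l
      induction l with
      | zero => intro i _; rfl
      | succ l ih =>
        intro i hi
        rw [← ih i hi, ← add_assoc, rst_succ]
        have hk' := body_mem hx (n := m + j + 1 + l) (by omega)
        have hst' := body_stem hx (n := m + j + 1 + l) (by omega)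
        by_cases h : ina (rst x (m + j + 1 + l))
        · simp only [S, if_pos h] at hk'
          rw [hk'.2]
        · simp only [S, if_neg h] at hk'
          obtain ⟨n', hn1', hn2'⟩ := hk'
          have h3 := (hκ n' (by rw [hn1']; exact ⟨hmem _, hst', h⟩)).2.2
          rw [hn1', ← hn2'] at h3
          apply δlt
          have h4 : δ (τ n) (κ n) ≤ M (rst x (m + j + 1 + l)) := by
            have h5 : m + j ∈ Finset.range (rst x (m + j + 1 + l)).length := by
              rw [rst_len, Finset.mem_range]; omega
            have h6 := Finset.single_le_sum (f := fun i => δ ((rst x (m + j + 1 + l)).take i)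
              ((rst x (m + j + 1 + l)).getD i 0)) (fun _ _ => Nat.zero_le _) h5
            have h7 : (rst x (m + j + 1 + l)).getD (m + j) 0 = x (m + j) := by
              rw [List.getD_eq_getElem _ _ (Finset.mem_range.1 h5), rst_get]
            simp only [h7] at h6
            rw [rst_take _ _ _ (by omega)] at h6
            rw [hn1, ← hn2]; exact h6
          omega
    have hF : ∀ i ≤ δ (τ n) (κ n), (FB B x i ↔ g (rst x (m + j + 1)) i) := by
      intro i hi
      rw [← hstab i i hi]
      exact (gl_rst B U x _ i (by omega)).symm
    refine ⟨m + j, by omega, n, hgd, hn1, hn2.symm, ?_, ?_⟩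
    · intro i hi
      rw [hF i hi.le, ← hj2, rst_succ]
      rw [hn1, ← hn2] at hi
      exact δlt _ _ _ hi
    · rw [hF _ le_rfl, ← hj2, rst_succ, hn1, ← hn2]
      exact δeq _ _ hj1
  intro x hx y hy hxy hr
  have key : ∀ n, ∃ m ≥ n, s.length ≤ m ∧ rst x m = rst y m := by
    intro n
    induction n with
    | zero =>
      refine ⟨s.length, by omega, le_rfl, ?_⟩
      rw [← (body_stem hx le_rfl).eq_of_length (by rw [rst_len]),
        ← (body_stem hy le_rfl).eq_of_length (by rw [rst_len])]
    | succ n ih =>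
      obtain ⟨m, hm1, hm2, hm3⟩ := ih
      obtain ⟨m1, hm1', a, ha1, ha2, ha3, ha4, ha5⟩ := exitL x hx hr m hm2
      obtain ⟨m2, hm2', b, hb1, hb2, hb3, hb4, hb5⟩ := exitL y hy (hxy ▸ hr) m hm2
      rw [← hxy, ← hm3] at hb4 hb5
      have hab : a = b := by
        apply hinj a b ha1 hb1
        rcases lt_trichotomy (δ (τ a) (κ a)) (δ (τ b) (κ b)) with h | h | h
        · exact absurd (hb4 _ h) ha5
        · exact h
        · exact absurd (ha4 _ h) hb5
      subst hab
      have e1 : rst x m1 = rst y m2 := ha2.symm.trans hb2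
      have e2 : m1 = m2 := by
        have := congrArg List.length e1
        rwa [rst_len, rst_len] at this
      subst e2
      refine ⟨m1 + 1, by omega, by omega, ?_⟩
      rw [rst_succ, rst_succ, e1, ← ha3, ← hb3]
  ext n
  obtain ⟨m, hm, -, h⟩ := key (n+1)
  have h1 := rst_get x m n (by rw [rst_len]; omega)
  have h2 := rst_get y m n (by rw [rst_len]; omega)
  rw [← h1, ← h2]
  simp only [h]

/-- every X ⊆ ω^ω of size 𝔠 has a subset of size 𝔠 belonging to l₀. -/
theorem stmt13 (X : Set (ℕ → ℕ)) (hX : Cardinal.mk ↑X = Cardinal.continuum) :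
    ∃ A ⊆ X, A ∈ treeIdeal {T | IsLaverTree T} ∧ Cardinal.mk ↑A = Cardinal.continuum := by
  classical
  by_cases hX0 : X ∈ treeIdeal {T | IsLaverTree T}
  · exact ⟨X, Subset.rfl, hX0, hX⟩
  have hX1 : ∃ P, IsLaverTree P ∧ ∀ Q, IsLaverTree Q → Q ⊆ P → (treeBody Q ∩ X).Nonempty := by
    by_contra hcon
    apply hX0
    intro P hP
    by_contra h2
    apply hcon
    refine ⟨P, hP, fun Q hQ hQP => ?_⟩
    by_contra h3
    exact h2 ⟨Q, hQ, hQP, Set.not_nonempty_iff_eq_empty.1 h3⟩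
  obtain ⟨P, hP, hPX⟩ := hX1
  have hbig : ∀ Q, IsLaverTree Q → Q ⊆ P → Cardinal.continuum ≤ Cardinal.mk ↑(treeBody Q ∩ X) := by
    intro Q hQ hQP
    by_contra h
    obtain ⟨Q', h1, h2, h3⟩ := shrink_lem Q hQ _ (not_le.1 h)
    obtain ⟨x, hx1, hx2⟩ := hPX Q' h1 (h2.trans hQP)
    have hx3 : x ∈ treeBody Q' ∩ (treeBody Q ∩ X) := ⟨hx1, fun n => h2 (hx1 n), hx2⟩
    rw [h3] at hx3; exact hx3
  obtain ⟨B, R, code, hc, hR⟩ := split_lem P hP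
  have hm : ∀ T : Set (List ℕ), ∃ Q, ∃ E : Set (ℕ → Prop), E.Countable ∧
      (IsLaverTree T → IsLaverTree Q ∧ Q ⊆ T) ∧
      ∀ x ∈ treeBody Q, ∀ y ∈ treeBody Q, FB B x = FB B y → FB B x ∉ E → x = y := by
    intro T
    by_cases h : IsLaverTree T
    · obtain ⟨Q, h1, h2, E, h3, h4⟩ := main_lem T h B
      exact ⟨Q, E, h3, fun _ => ⟨h1, h2⟩, h4⟩
    · exact ⟨∅, ∅, countable_empty, fun h' => absurd h' h, fun x hx => absurd (hx 0) (by simp)⟩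
  choose Q E hE hQ hQE using hm
  have hI : Cardinal.mk (Set (List ℕ)) = Cardinal.continuum := by simp
  have step : ∀ (I : Set (Set (List ℕ))) (Y : Set (ℕ → ℕ)), Cardinal.mk I < Cardinal.continuum →
      Cardinal.mk Y < Cardinal.continuum → ∃ a ∈ X, a ∉ Y ∧ ∀ T ∈ I, a ∉ treeBody (Q T) := by
    intro I Y hI hY
    have hEI : Cardinal.mk ↑(⋃ T : I, E T) < Cardinal.continuum := by
      refine (Cardinal.mk_iUnion_le _).trans_lt ?_
      refine Cardinal.mul_lt_of_lt Cardinal.aleph0_le_continuum hI ?_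
      refine lt_of_le_of_lt (ciSup_le' fun T => ?_) Cardinal.aleph0_lt_continuum
      exact (hE T).le_aleph0
    have hρ : ∃ ρ, code ρ ∉ ⋃ T : I, E T := by
      by_contra hcon
      push Not at hcon
      have := Cardinal.mk_le_of_injective (f := fun ρ => (⟨code ρ, hcon ρ⟩ : ↑(⋃ T : I, E T)))
        (fun a b h => hc (congrArg Subtype.val h))
      rw [card_pred] at this
      exact absurd hEI (not_lt.2 this)
    obtain ⟨ρ, hρ⟩ := hρ
    by_contra hcon
    push Not at hcon
    have hcov : treeBody (R ρ) ∩ X ⊆ Y ∪ ⋃ T : I, (treeBody (Q T) ∩ treeBody (R ρ)) := by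
      rintro a ⟨ha1, ha2⟩
      by_cases hY : a ∈ Y
      · exact Or.inl hY
      · obtain ⟨T, hT, h⟩ := hcon a ha2 hY
        exact Or.inr (mem_iUnion.2 ⟨⟨T, hT⟩, h, ha1⟩)
    have h1 := (hbig (R ρ) (hR ρ).1 (hR ρ).2.1).trans (Cardinal.mk_le_mk_of_subset hcov)
    refine absurd h1 (not_le.2 ?_)
    refine (Cardinal.mk_union_le _ _).trans_lt ?_
    refine Cardinal.add_lt_of_lt Cardinal.aleph0_le_continuum hY ?_
    refine (Cardinal.mk_iUnion_le _).trans_lt ?_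
    refine Cardinal.mul_lt_of_lt Cardinal.aleph0_le_continuum hI ?_
    refine lt_of_le_of_lt (ciSup_le' fun T => ?_)
      (Cardinal.one_lt_aleph0.trans Cardinal.aleph0_lt_continuum)
    rw [Cardinal.mk_le_one_iff_set_subsingleton]
    rintro x ⟨hx1, hx2⟩ y ⟨hy1, hy2⟩
    have ex := (hR ρ).2.2 x hx2
    have ey := (hR ρ).2.2 y hy2
    refine hQE T x hx1 y hy1 (ex.trans ey.symm) ?_
    rw [ex]
    exact fun h => hρ (mem_iUnion.2 ⟨T, h⟩)
  obtain ⟨r, wo, hr⟩ := Cardinal.exists_ord_eq (Set (List ℕ))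
  have hseg : ∀ T, Cardinal.mk {T' | r T' T} < Cardinal.continuum := by
    intro T
    rw [← hI]
    exact Cardinal.card_typein_lt T hr
  have wf : WellFounded r := wo.wf
  let a : Set (List ℕ) → (ℕ → ℕ) := wf.fix fun T rec =>
    if h : ∃ z ∈ X, z ∉ range (fun T' : {T' | r T' T} => rec T' T'.2) ∧
        ∀ T' ∈ {T' | r T' T}, z ∉ treeBody (Q T') then h.choose else 0
  have ha : ∀ T, a T ∈ X ∧ a T ∉ range (fun T' : {T' | r T' T} => a T') ∧
        ∀ T' ∈ {T' | r T' T}, a T ∉ treeBody (Q T') := by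
    intro T
    have h := step {T' | r T' T} (range (fun T' : {T' | r T' T} => a T')) (hseg T)
      (Cardinal.mk_range_le.trans_lt (hseg T))
    have e : a T = h.choose := by
      simp only [a]
      rw [WellFounded.fix_eq]
      exact dif_pos h
    rw [e]
    exact h.choose_spec
  have hinj : Function.Injective a := by
    intro T T' h
    rcases trichotomous_of r T T' with h1 | h1 | h1
    · exact absurd ⟨⟨T, h1⟩, h⟩ (ha T').2.1
    · exact h1
    · exact absurd ⟨⟨T', h1⟩, h.symm⟩ (ha T).2.1
  refine ⟨range a, ?_, ?_, ?_⟩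
  · rintro _ ⟨T, rfl⟩; exact (ha T).1
  · intro T hT
    obtain ⟨hQ1, hQ2⟩ := hQ T hT
    have hsmall : Cardinal.mk ↑(insert (a T) (a '' {T' | r T' T})) < Cardinal.continuum := by
      refine Cardinal.mk_insert_le.trans_lt ?_
      refine Cardinal.add_lt_of_lt Cardinal.aleph0_le_continuum
        (Cardinal.mk_image_le.trans_lt (hseg T))
        (Cardinal.one_lt_aleph0.trans Cardinal.aleph0_lt_continuum)
    obtain ⟨Q', h1, h2, h3⟩ := shrink_lem _ hQ1 _ hsmall
    refine ⟨Q', h1, h2.trans hQ2, ?_⟩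
    rw [Set.eq_empty_iff_forall_notMem]
    rintro _ ⟨hx, T', rfl⟩
    rcases trichotomous_of r T T' with h | h | h
    · exact (ha T').2.2 T h fun n => h2 (hx n)
    · subst h
      exact Set.eq_empty_iff_forall_notMem.1 h3 _ ⟨hx, Or.inl rfl⟩
    · exact Set.eq_empty_iff_forall_notMem.1 h3 _ ⟨hx, Or.inr ⟨T', h, rfl⟩⟩
  · rw [Cardinal.mk_range_eq a hinj, hI]
end
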